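/- arXiv:2211.09417 — 3 statements merged into one kernel-verified Lean document; each statement's English description precedes it below -/
import Mathlib

section
/- For positive integers α, β and n, let N_{α,β}(n) denote the number of distinct factors of w_{α,β}^ω having length n and minimal period α+β, and let H_{α,β}(n) denote the number of such factors that are heavy. Let σ = β/(α+β) and let α' (respectively β') be the multiplicative inverse of α (respectively β) modulo α+β, taken in {1,…,α+β−1}. Then: H_{α,β}(n) = 0 if N_{α,β}(n) = 0; H_{α,β}(n) = 2·(Σ_{i=0}^{n−α−β} (⌈σ(n−i)⌉ + ⌊σi⌋)) − ⌊σn⌋·N_{α,β}(n) if gcd(α,β)=1 and α+β ≤ n < α+β+min{α',β'}; H_{α,β}(n) = (Σ_{i=0}^{n−α'} (⌊σ(n−i)⌋ + ⌈σi⌉)) − ⌊σn⌋·N_{α,β}(n) if gcd(α,β)=1 and α+β+β' ≤ n < α+β+α'; H_{α,β}(n) = (Σ_{i=0}^{n−β'} (⌈σ(n−i)⌉ + ⌊σi⌋)) − ⌊σn⌋·N_{α,β}(n) if gcd(α,β)=1 and α+β+α' ≤ n < α+β+β'; and H_{α,β}(n) = nβ mod (α+β) if gcd(α,β)=1 and n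 ≥ α+β+max{α',β'}. -/
/-- The lower Christoffel word `w_{a,b}`: the binary word of length `a+b` whose
`k`-th letter (1-based) is `⌊kb/(a+b)⌋ - ⌊(k-1)b/(a+b)⌋` (with `false = 0`, `true = 1`). -/
def lowerChristoffel (a b : ℕ) : List Bool :=
  (List.range (a + b)).map fun i => decide ((i + 1) * b / (a + b) ≠ i * b / (a + b))

/-- The upper Christoffel word `W_{a,b}`: the binary word of length `a+b` whose
`k`-th letter is `⌈kb/(a+b)⌉ - ⌈(k-1)b/(a+b)⌉`. -/
def upperChristoffel (a b : ℕ) : List Bool :=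
  (List.range (a + b)).map fun i =>
    decide (((i + 1) * b + (a + b) - 1) / (a + b) ≠ (i * b + (a + b) - 1) / (a + b))

/-- `p` is a period of `w`: `p` is positive and `w_i = w_{i+p}` for all valid indices. -/
def HasPeriod (w : List Bool) (p : ℕ) : Prop :=
  0 < p ∧ ∀ i, i + p < w.length → w.getD i false = w.getD (i + p) false

/-- A central word: a binary word with two coprime periods `p`, `q` and length `p + q - 2`. -/
def IsCentral (w : List Bool) : Prop :=
  ∃ p q : ℕ, Nat.Coprime p q ∧ HasPeriod w p ∧ HasPeriod w q ∧ w.length + 2 = p + q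

/-- A binary word is balanced if any two factors of the same length have numbers of `1`s
differing by at most `1`. -/
def BalancedWord (w : List Bool) : Prop :=
  ∀ u v : List Bool, u <:+: w → v <:+: w → u.length = v.length →
    |(u.count true : ℤ) - (v.count true : ℤ)| ≤ 1

/-- `w^m`: the `m`-th power of the word `w`. -/
def wpow (w : List Bool) (m : ℕ) : List Bool := (List.replicate m w).flatten

/-- A word is primitive if it is not a proper power. -/
def IsPrimitiveWord (w : List Bool) : Prop := ¬ ∃ (v : List Bool) (m : ℕ), 2 ≤ m ∧ w = wpow v m

/-- A Lyndon word: a nonempty primitive word lexicographically strictly smaller than all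
of its proper nonempty suffixes (for the order `0 < 1`, i.e. `false < true`). -/
def IsLyndonWord (w : List Bool) : Prop :=
  w ≠ [] ∧ IsPrimitiveWord w ∧
    ∀ u v : List Bool, w = u ++ v → u ≠ [] → v ≠ [] → List.Lex (· < ·) w v

/-- `p` is the minimal period of `w`. -/
def IsMinPeriod (w : List Bool) (p : ℕ) : Prop :=
  HasPeriod w p ∧ ∀ q : ℕ, HasPeriod w q → p ≤ q

/-- `u` is a factor of the infinite periodic word `w^ω`. -/
def IsOmegaFactor (u w : List Bool) : Prop := ∃ m : ℕ, u <:+: wpow w m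

/-- A primitive Christoffel word: a lower or upper Christoffel word `w_{a,b}` with
`gcd(a,b) = 1`. -/
def IsPrimitiveChristoffel (c : List Bool) : Prop :=
  ∃ a b : ℕ, Nat.Coprime a b ∧ (c = lowerChristoffel a b ∨ c = upperChristoffel a b)

/-- `N_{α,β}(n)`: the number of distinct factors of `w_{α,β}^ω` of length `n` and minimal
period `α + β`. -/
noncomputable def NFactors (α β n : ℕ) : ℕ :=
  Set.ncard {u : List Bool |
    IsOmegaFactor u (lowerChristoffel α β) ∧ u.length = n ∧ IsMinPeriod u (α + β)}

/-- `H_{α,β}(n)`: the number of distinct heavy factors of `w_{α,β}^ω` of length `n` and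
minimal period `α + β` (heavy: `⌊nβ/(α+β)⌋ + 1` occurrences of `1`). -/
noncomputable def HFactors (α β n : ℕ) : ℕ :=
  Set.ncard {u : List Bool |
    IsOmegaFactor u (lowerChristoffel α β) ∧ u.length = n ∧ IsMinPeriod u (α + β) ∧
      u.count true = n * β / (α + β) + 1}

/-!
The factors of `w_{α,β}^ω` are read off a rotation: starting at a phase in `ℤ/L`, `L = α + β`, add
`β` repeatedly and write `1` whenever a representative wraps around. A factor of length at least `L`
determines its starting phase, and it is heavy exactly when the representative of the phase drops
from its start to its end.

The letters at phases `r` and `r + 1` differ only if `r` or `r + β` equals `-1`, so a factor has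
`α'` or `β'` as a smaller period unless it visits the phases `0` and `-1`. Conversely, a block of
length `L` starting at phase `0` or `-1` is unbordered: no phase lies below `0` or above `-1`, so a
proper prefix and a suffix of the same length have different weights. Hence the factors of
minimal period `L` are those starting on one of two backward orbits of length `n - L + 1`, those of
`0` and `-1`. These are disjoint, merge into one longer orbit, or cover `ℤ/L`, according to the
size of `n`, because `-α'` steps and `β'` steps both move the phase by `1`. As the number of ones is
`⌊σn⌋` plus the heaviness, summing it over the orbits yields `H`.
-/

section RotationWord

variable (L b : ℕ)

/-- The letter read at phase `r` by the rotation coding of slope `b / L`. The `k`-th letter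
(0-based) of the lower Christoffel word of slope `b / L` is the one read at phase `k * b`. -/
def rotationLetter (r : ZMod L) : Bool := decide (L ≤ r.val + b)

/-- The word of length `n` read from phase `r` by the rotation coding of slope `b / L`, the phase
growing by `b` at each letter. -/
def rotationWord (n : ℕ) (r : ZMod L) : List Bool :=
  (List.range n).map fun i : ℕ ↦ rotationLetter L b (r + i * b)

@[simp]
theorem length_rotationWord (n : ℕ) (r : ZMod L) : (rotationWord L b n r).length = n := by
  simp [rotationWord]

theorem getD_rotationWord {n i : ℕ} (hi : i < n) (r : ZMod L) :
    (rotationWord L b n r).getD i false = rotationLetter L b (r + i * b) := by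
  simp [rotationWord, List.getD, hi]

theorem rotationWord_add (m n : ℕ) (r : ZMod L) :
    rotationWord L b (m + n) r = rotationWord L b m r ++ rotationWord L b n (r + m * b) := by
  simp [rotationWord, List.range_add, add_mul, add_assoc]

theorem rotationWord_succ (n : ℕ) (r : ZMod L) :
    rotationWord L b (n + 1) r = rotationWord L b n r ++ [rotationLetter L b (r + n * b)] := by
  simp [rotationWord, List.range_succ]

variable {L b}

theorem hasPeriod_rotationWord_iff {n q : ℕ} {r : ZMod L} :
    HasPeriod (rotationWord L b n r) q ↔ 0 < q ∧ ∀ i : ℕ, i + q < n →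
      rotationLetter L b (r + i * b) = rotationLetter L b (r + (i + q : ℕ) * b) := by
  unfold HasPeriod
  rw [length_rotationWord]
  refine and_congr_right fun _ ↦ forall₂_congr fun i hi ↦ ?_
  rw [getD_rotationWord L b (by omega), getD_rotationWord L b hi]

theorem rotationWord_eq_of_hasPeriod {n m i q : ℕ} {r : ZMod L}
    (h : HasPeriod (rotationWord L b n r) q) (hi : i + m + q ≤ n) :
    rotationWord L b m (r + i * b) = rotationWord L b m (r + i * b + q * b) := by
  refine List.map_congr_left fun k hk ↦ ?_
  have hk := List.mem_range.mp hk
  have := (hasPeriod_rotationWord_iff.mp h).2 (i + k) (by omega)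
  push_cast at this
  convert this using 2 <;> ring

end RotationWord

section Phases

variable {L b : ℕ}

theorem natCast_ne_zero_of_pos_of_lt {q : ℕ} (h0 : 0 < q) (hq : q < L) : (q : ZMod L) ≠ 0 := by
  rw [Ne, ZMod.natCast_eq_zero_iff]
  exact Nat.not_dvd_of_pos_of_lt h0 hq

/-- `a` and `c` are the representatives in `{1, …, L - 1}` of the inverses of `-b` and `b` modulo
`L`. For `L = α + β` and `b = β` they are the inverses of `α` and `β`. -/
structure IsInversePair (L b a c : ℕ) : Prop where
  left_pos : 0 < a
  right_pos : 0 < c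
  add_eq : a + c = L
  right_mul_eq_one : (c : ZMod L) * b = 1

theorem IsInversePair.isUnit {a c : ℕ} (h : IsInversePair L b a c) : IsUnit (b : ZMod L) :=
  .of_mul_eq_one_right _ h.right_mul_eq_one

theorem mul_eq_neg_one_of_add_eq {a c : ℕ} (hac : a + c = L) (hc : (c : ZMod L) * b = 1) :
    (a : ZMod L) * b = -1 := by
  have hsum : (a : ZMod L) + c = 0 := by rw [← Nat.cast_add, hac, ZMod.natCast_self]
  linear_combination (b : ZMod L) * hsum - hc

theorem le_or_le_of_mul_eq_mul_add_one {a c i k : ℕ} (hac : a + c = L)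
    (hc : (c : ZMod L) * b = 1) (h : (i : ZMod L) * b = k * b + 1) : k + c ≤ i ∨ i + a ≤ k := by
  have hi : (i : ZMod L) = (k + c : ℕ) := by
    push_cast
    linear_combination (c : ZMod L) * h + ((k : ZMod L) - i) * hc
  by_contra! hlt
  have hdvd := (Nat.modEq_iff_dvd' hlt.1.le).mp ((ZMod.natCast_eq_natCast_iff _ _ _).mp hi)
  have := Nat.le_of_dvd (by omega) hdvd
  omega

variable [NeZero L]

theorem val_add_lt_left_iff (r t : ZMod L) : (r + t).val < r.val ↔ L ≤ r.val + t.val := by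
  have := t.val_lt
  rcases lt_or_ge (r.val + t.val) L with h | h
  · rw [ZMod.val_add_of_lt h]; omega
  · have := ZMod.val_add_val_of_le h; omega

theorem val_neg_one_add_one : (-1 : ZMod L).val + 1 = L := by
  obtain ⟨m, rfl⟩ := Nat.exists_eq_succ_of_ne_zero (NeZero.ne L)
  rw [ZMod.val_neg_one]

theorem val_lt_val_neg_one {r : ZMod L} (h : r ≠ -1) : r.val < (-1 : ZMod L).val := by
  have := r.val_lt
  have := (ZMod.val_injective L).ne h
  have := val_neg_one_add_one (L := L)
  omega

theorem exists_natCast_mul_eq (hb : IsUnit (b : ZMod L)) (t : ZMod L) :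
    ∃ i < L, (i : ZMod L) * b = t := by
  obtain ⟨s, rfl⟩ := hb.dvd (a := t)
  exact ⟨s.val, s.val_lt, by rw [ZMod.natCast_zmod_val, mul_comm]⟩

theorem card_filter_val_add_lt_val (t : ZMod L) :
    (Finset.univ.filter fun r : ZMod L ↦ (r + t).val < r.val).card = t.val := by
  have ht := t.val_lt
  calc (Finset.univ.filter fun r : ZMod L ↦ (r + t).val < r.val).card
      = (Finset.Ico (L - t.val) L).card :=
        Finset.card_nbij' ZMod.val Nat.cast
          (fun r hr ↦ by
            have := r.val_lt
            simp only [Finset.coe_filter, Finset.mem_univ, true_and, Set.mem_ofPred_eq,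
              val_add_lt_left_iff] at hr
            exact Finset.mem_coe.mpr (Finset.mem_Ico.mpr ⟨by omega, this⟩))
          (fun k hk ↦ by
            have hk := Finset.mem_Ico.mp hk
            simp only [Finset.coe_filter, Finset.mem_univ, true_and, Set.mem_ofPred_eq,
              val_add_lt_left_iff, ZMod.val_cast_of_lt hk.2]
            omega)
          (fun r _ ↦ ZMod.natCast_zmod_val r)
          (fun k hk ↦ ZMod.val_cast_of_lt (Finset.mem_Ico.mp hk).2)
    _ = t.val := by rw [Nat.card_Ico]; omega

end Phases

section Heaviness

variable {L b : ℕ}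

theorem add_div_eq_add_ite (hb : b < L) (x : ℕ) :
    (x + b) / L = x / L + if L ≤ x % L + b then 1 else 0 := by
  rw [Nat.add_div (by omega), Nat.div_eq_of_lt hb, Nat.mod_eq_of_lt hb, add_zero]

variable [NeZero L]

theorem count_rotationWord (hb : b < L) (n : ℕ) (r : ZMod L) :
    (rotationWord L b n r).count true = (r.val + n * b) / L := by
  induction n with
  | zero => simp [rotationWord, Nat.div_eq_of_lt r.val_lt]
  | succ n ih =>
    have hval : (r + n * b).val = (r.val + n * b) % L := by
      rw [← Nat.cast_mul, ZMod.val_add, ZMod.val_natCast, Nat.add_mod_mod]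
    rw [rotationWord_succ, List.count_append, ih, List.count_singleton, rotationLetter, hval,
      add_one_mul, ← add_assoc, add_div_eq_add_ite hb]
    simp

theorem count_rotationWord_eq_add_ite (hb : b < L) (n : ℕ) (r : ZMod L) :
    (rotationWord L b n r).count true =
      n * b / L + if (r + n * b).val < r.val then 1 else 0 := by
  rw [count_rotationWord hb, add_comm, add_div_eq_add_ite r.val_lt]
  simp only [val_add_lt_left_iff, ← Nat.cast_mul, ZMod.val_natCast, add_comm r.val]

theorem rotationWord_ne_of_le_of_lt (hb : b < L) {n : ℕ} {r s : ZMod L}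
    (hr : r.val ≤ (r + n * b).val) (hs : (s + n * b).val < s.val) :
    rotationWord L b n r ≠ rotationWord L b n s := by
  intro h
  have hcount := congrArg (List.count true) h
  rw [count_rotationWord_eq_add_ite hb, count_rotationWord_eq_add_ite hb, if_neg hr.not_gt,
    if_pos hs] at hcount
  omega

theorem rotationWord_injective (hb : b < L) (hu : IsUnit (b : ZMod L)) {n : ℕ} (hn : L ≤ n) :
    Function.Injective (rotationWord L b n : ZMod L → List Bool) := by
  suffices h : ∀ r s : ZMod L, r.val < s.val → rotationWord L b n r ≠ rotationWord L b n s by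
    intro r s hrs
    by_contra hne
    rcases ((ZMod.val_injective L).ne hne).lt_or_gt with hlt | hlt
    · exact h r s hlt hrs
    · exact h s r hlt hrs.symm
  intro r s hlt heq
  -- The steps leading from `s` to `0` read a heavy prefix, whereas from `r` they read a light one.
  obtain ⟨m, hm, hms⟩ := exists_natCast_mul_eq hu (-s)
  obtain ⟨k, rfl⟩ := Nat.exists_eq_add_of_le (hm.le.trans hn)
  have hprefix : rotationWord L b m r = rotationWord L b m s := by
    rw [rotationWord_add, rotationWord_add] at heq
    exact List.append_inj_left heq (by simp)
  refine rotationWord_ne_of_le_of_lt hb ?_ ?_ hprefix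
  · rw [hms, ← not_lt, ← sub_eq_add_neg]
    intro h
    have hcarry : (r - s + s).val < s.val := by simpa using hlt
    rw [add_comm, val_add_lt_left_iff] at hcarry
    have := ZMod.val_add_val_of_le hcarry
    rw [add_sub_cancel] at this
    have := s.val_lt
    omega
  · rw [hms, add_neg_cancel, ZMod.val_zero]
    omega

theorem rotationWord_ne_rotationWord_add (hb : b < L) (hu : IsUnit (b : ZMod L)) {m q : ℕ}
    (hm : 0 < m) (hq : 0 < q) (hmq : m + q = L) {r : ZMod L} (hr : r = 0 ∨ r = -1) :
    rotationWord L b m r ≠ rotationWord L b m (r + q * b) := by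
  have hcycle : (m : ZMod L) + q = 0 := by rw [← Nat.cast_add, hmq, ZMod.natCast_self]
  have hback : r + q * b + m * b = r := by linear_combination (b : ZMod L) * hcycle
  have hstart : r + q * b ≠ r := by
    simpa [hu.mul_left_eq_zero] using natCast_ne_zero_of_pos_of_lt hq (by omega)
  have hend : r + m * b ≠ r := by
    simpa [hu.mul_left_eq_zero] using natCast_ne_zero_of_pos_of_lt hm (by omega)
  -- The phase cannot drop from `0` nor climb from `-1`, so one border is light, the other heavy.
  rcases hr with rfl | rfl
  · refine rotationWord_ne_of_le_of_lt hb (by simp) ?_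
    rw [hback, ZMod.val_zero]
    exact ZMod.val_pos.mpr hstart
  · refine (rotationWord_ne_of_le_of_lt hb ?_ (val_lt_val_neg_one hend)).symm
    rw [hback]
    exact (val_lt_val_neg_one hstart).le

end Heaviness

section MinimalPeriod

variable {L : ℕ} [NeZero L] {b n : ℕ} {r : ZMod L}

theorem rotationLetter_add_one (h : r ≠ -1) (hb : r + b ≠ -1) :
    rotationLetter L b (r + 1) = rotationLetter L b r := by
  have hlast := val_neg_one_add_one (L := L)
  have hval : (r + 1).val = r.val + 1 := by
    have := val_lt_val_neg_one h
    rw [← Nat.cast_one, ZMod.val_add, ZMod.val_natCast, Nat.add_mod_mod,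
      Nat.mod_eq_of_lt (by omega)]
  have hjump : r.val + b + 1 ≠ L := by
    intro hL
    apply hb
    rw [eq_neg_iff_add_eq_zero, ← ZMod.natCast_zmod_val r]
    exact_mod_cast (ZMod.natCast_eq_zero_iff _ _).mpr hL.symm.dvd
  simp only [rotationLetter, hval, decide_eq_decide]
  omega

theorem hasPeriod_rotationWord_self : HasPeriod (rotationWord L b n r) L :=
  hasPeriod_rotationWord_iff.mpr ⟨NeZero.pos L, fun i _ ↦ by simp⟩

theorem hasPeriod_of_mul_eq_one {c : ℕ} (hc0 : 0 < c) (hc : (c : ZMod L) * b = 1)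
    (h : ∀ i : ℕ, i + c ≤ n → r + i * b ≠ -1) : HasPeriod (rotationWord L b n r) c := by
  refine hasPeriod_rotationWord_iff.mpr ⟨hc0, fun i hi ↦ ?_⟩
  have hshift : r + (i + c : ℕ) * b = r + i * b + 1 := by
    push_cast
    linear_combination hc
  have hnext : r + i * b + b ≠ -1 := by
    simpa [add_one_mul, add_assoc] using h (i + 1) (by omega)
  rw [hshift, rotationLetter_add_one (h i hi.le) hnext]

theorem hasPeriod_of_mul_eq_neg_one {a : ℕ} (ha0 : 0 < a) (ha : (a : ZMod L) * b = -1)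
    (h : ∀ i : ℕ, i + a ≤ n → r + i * b ≠ 0) : HasPeriod (rotationWord L b n r) a := by
  refine hasPeriod_rotationWord_iff.mpr ⟨ha0, fun i hi ↦ ?_⟩
  have hshift : r + i * b = r + (i + a : ℕ) * b + 1 := by
    push_cast
    linear_combination -ha
  have hnext : r + (i + 1 : ℕ) * b ≠ 0 := h (i + 1) (by omega)
  rw [hshift, rotationLetter_add_one]
  · intro heq
    exact h i hi.le (by rw [hshift, heq, neg_add_cancel])
  · intro heq
    push_cast at heq hnext
    exact hnext (by linear_combination heq - ha)

theorem le_of_hasPeriod_rotationWord (hb : b < L) (hu : IsUnit (b : ZMod L)) {i q : ℕ}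
    (hi : i + L ≤ n) (hr : r + i * b = 0 ∨ r + i * b = -1)
    (hq : HasPeriod (rotationWord L b n r) q) : L ≤ q := by
  by_contra! hlt
  obtain ⟨m, hm⟩ := Nat.exists_eq_add_of_lt hlt
  exact rotationWord_ne_rotationWord_add (m := m + 1) hb hu (by omega) hq.1 (by omega) hr
    (rotationWord_eq_of_hasPeriod hq (by omega))

theorem IsInversePair.isMinPeriod_rotationWord_iff {a c : ℕ} (h : IsInversePair L b a c)
    (hb : b < L) :
    IsMinPeriod (rotationWord L b n r) L ↔
      ∃ i : ℕ, i + L ≤ n ∧ (r + i * b = 0 ∨ r + i * b = -1) := by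
  obtain ⟨ha0, hc0, hac, hc⟩ := h
  constructor
  · rintro ⟨-, hmin⟩
    by_contra! hno
    obtain ⟨k, hk, hkr⟩ : ∃ k : ℕ, k + c ≤ n ∧ r + k * b = -1 := by
      by_contra! h
      have := hmin c (hasPeriod_of_mul_eq_one hc0 hc h)
      omega
    obtain ⟨i, hi, hir⟩ : ∃ i : ℕ, i + a ≤ n ∧ r + i * b = 0 := by
      by_contra! h
      have := hmin a (hasPeriod_of_mul_eq_neg_one ha0 (mul_eq_neg_one_of_add_eq hac hc) h)
      omega
    have hgap : (i : ZMod L) * b = k * b + 1 := by linear_combination hir - hkr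
    have hilate : ¬ i + L ≤ n := fun h ↦ (hno i h).1 hir
    have hklate : ¬ k + L ≤ n := fun h ↦ (hno k h).2 hkr
    rcases le_or_le_of_mul_eq_mul_add_one hac hc hgap with h | h <;> omega
  · rintro ⟨i, hi, hir⟩
    exact ⟨hasPeriod_rotationWord_self, fun q ↦
      le_of_hasPeriod_rotationWord hb (.of_mul_eq_one_right _ hc) hi hir⟩

end MinimalPeriod

section CriticalPhases

variable {L : ℕ} {b : ℕ}

/-- The phases from which the rotation by `b` reaches `t` in fewer than `m` steps. -/
def backwardOrbit (b : ℕ) (t : ZMod L) (m : ℕ) : Finset (ZMod L) :=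
  (Finset.range m).image fun i : ℕ ↦ t - i * b

theorem mem_backwardOrbit {t r : ZMod L} {m : ℕ} :
    r ∈ backwardOrbit b t m ↔ ∃ i < m, r + i * b = t := by
  simp [backwardOrbit, sub_eq_iff_eq_add, eq_comm (a := t)]

theorem backwardOrbit_union_backwardOrbit_sub (t : ZMod L) {m k : ℕ} (hk : k ≤ m) :
    backwardOrbit b t m ∪ backwardOrbit b (t - k * b) m = backwardOrbit b t (m + k) := by
  ext r
  simp only [Finset.mem_union, mem_backwardOrbit]
  constructor
  · rintro (⟨i, hi, rfl⟩ | ⟨i, hi, h⟩)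
    · exact ⟨i, by omega, rfl⟩
    · exact ⟨i + k, by omega, by push_cast; linear_combination h⟩
  · rintro ⟨i, hi, rfl⟩
    rcases lt_or_ge i m with him | him
    · exact .inl ⟨i, him, rfl⟩
    · refine .inr ⟨i - k, by omega, ?_⟩
      rw [Nat.cast_sub (by omega)]
      ring

theorem sum_backwardOrbit {M : Type*} [AddCommMonoid M] (hu : IsUnit (b : ZMod L)) (t : ZMod L)
    {m : ℕ} (hm : m ≤ L) (f : ZMod L → M) :
    ∑ r ∈ backwardOrbit b t m, f r = ∑ i ∈ Finset.range m, f (t - i * b) := by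
  refine Finset.sum_image fun i hi k hk hik ↦ ?_
  rw [Finset.mem_coe, Finset.mem_range] at hi hk
  have hcast : (i : ZMod L) = k := hu.mul_left_injective (sub_right_injective hik)
  exact ((ZMod.natCast_eq_natCast_iff _ _ _).mp hcast).eq_of_lt_of_lt (by omega) (by omega)

theorem disjoint_backwardOrbit_zero_neg_one {a c m : ℕ} (hac : a + c = L)
    (hc : (c : ZMod L) * b = 1) (hma : m ≤ a) (hmc : m ≤ c) :
    Disjoint (backwardOrbit b (0 : ZMod L) m) (backwardOrbit b (-1) m) := by
  rw [Finset.disjoint_left]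
  intro r h0 h1
  obtain ⟨i, hi, hir⟩ := mem_backwardOrbit.mp h0
  obtain ⟨k, hk, hkr⟩ := mem_backwardOrbit.mp h1
  have hgap : (i : ZMod L) * b = k * b + 1 := by linear_combination hir - hkr
  rcases le_or_le_of_mul_eq_mul_add_one hac hc hgap with h | h <;> omega

variable [NeZero L]

theorem backwardOrbit_eq_univ (hu : IsUnit (b : ZMod L)) (t : ZMod L) {m : ℕ} (hm : L ≤ m) :
    backwardOrbit b t m = Finset.univ := by
  refine Finset.eq_univ_of_forall fun r ↦ mem_backwardOrbit.mpr ?_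
  obtain ⟨i, hi, h⟩ := exists_natCast_mul_eq hu (t - r)
  exact ⟨i, by omega, by rw [h, add_sub_cancel]⟩

/-- The phases from which the rotation word of length `n` has minimal period `L`: those from which
`0` or `-1` is reached at least `L` letters before the end. For `n < L` truncated subtraction makes
the set meaningless. -/
def criticalPhases (L b n : ℕ) : Finset (ZMod L) :=
  backwardOrbit b 0 (n - L + 1) ∪ backwardOrbit b (-1) (n - L + 1)

theorem IsInversePair.mem_criticalPhases_iff {n a c : ℕ} (h : IsInversePair L b a c) (hb : b < L)
    (hn : L ≤ n) {r : ZMod L} :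
    r ∈ criticalPhases L b n ↔ IsMinPeriod (rotationWord L b n r) L := by
  have hlt : ∀ i, i < n - L + 1 ↔ i + L ≤ n := by omega
  simp only [h.isMinPeriod_rotationWord_iff hb, criticalPhases, Finset.mem_union,
    mem_backwardOrbit, hlt, and_or_left, exists_or]

end CriticalPhases

section Christoffel

variable {α β : ℕ}

theorem lowerChristoffel_eq_rotationWord (hα : 0 < α) :
    lowerChristoffel α β = rotationWord (α + β) β (α + β) 0 := by
  unfold lowerChristoffel rotationWord
  refine List.map_congr_left fun i _ ↦ ?_
  rw [rotationLetter, zero_add, ← Nat.cast_mul, ZMod.val_natCast, add_one_mul,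
    add_div_eq_add_ite (by omega), decide_eq_decide]
  split_ifs with h <;> simp [h]

theorem wpow_rotationWord_self (L b m : ℕ) (r : ZMod L) :
    wpow (rotationWord L b L r) m = rotationWord L b (m * L) r := by
  induction m with
  | zero => simp [wpow, rotationWord]
  | succ m ih =>
    calc wpow (rotationWord L b L r) (m + 1)
        = rotationWord L b L r ++ wpow (rotationWord L b L r) m := by
          simp [wpow, List.replicate_succ]
      _ = rotationWord L b (L + m * L) r := by simp [ih, rotationWord_add]
      _ = rotationWord L b ((m + 1) * L) r := by rw [add_one_mul, add_comm]

theorem isInfix_rotationWord_iff {L b N : ℕ} {r : ZMod L} {u : List Bool} :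
    u <:+: rotationWord L b N r ↔
      ∃ i : ℕ, i + u.length ≤ N ∧ u = rotationWord L b u.length (r + i * b) := by
  constructor
  · rintro ⟨s, t, hst⟩
    have hN := congrArg List.length hst
    simp only [List.length_append, length_rotationWord] at hN
    rw [← hN, rotationWord_add, rotationWord_add] at hst
    have hsu := List.append_inj_left hst (by simp)
    exact ⟨s.length, by omega, List.append_inj_right hsu (by simp)⟩
  · rintro ⟨i, hi, hu⟩
    obtain ⟨k, rfl⟩ := Nat.exists_eq_add_of_le hi
    rw [rotationWord_add, rotationWord_add, ← hu]
    exact ⟨_, _, rfl⟩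

variable [NeZero (α + β)]

theorem isOmegaFactor_lowerChristoffel_iff (hα : 0 < α) (hu : IsUnit (β : ZMod (α + β)))
    {u : List Bool} :
    IsOmegaFactor u (lowerChristoffel α β) ↔
      ∃ r : ZMod (α + β), u = rotationWord (α + β) β u.length r := by
  simp only [IsOmegaFactor, lowerChristoffel_eq_rotationWord hα, wpow_rotationWord_self,
    isInfix_rotationWord_iff, zero_add]
  constructor
  · rintro ⟨-, i, -, h⟩
    exact ⟨_, h⟩
  · rintro ⟨r, h⟩
    obtain ⟨i, -, rfl⟩ := exists_natCast_mul_eq hu r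
    exact ⟨i + u.length, i, Nat.le_mul_of_pos_right _ (NeZero.pos _), h⟩

theorem IsInversePair.setOf_factors_eq_image {n a c : ℕ} (h : IsInversePair (α + β) β a c)
    (hα : 0 < α) (hn : α + β ≤ n) :
    {u | IsOmegaFactor u (lowerChristoffel α β) ∧ u.length = n ∧ IsMinPeriod u (α + β)} =
      rotationWord (α + β) β n '' (criticalPhases (α + β) β n : Set (ZMod (α + β))) := by
  ext u
  simp only [isOmegaFactor_lowerChristoffel_iff hα h.isUnit, Set.mem_ofPred_eq, Set.mem_image,
    Finset.mem_coe, h.mem_criticalPhases_iff (show β < α + β by omega) hn]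
  constructor
  · rintro ⟨⟨r, hr⟩, rfl, hmin⟩
    exact ⟨r, hr ▸ hmin, hr.symm⟩
  · rintro ⟨r, hmin, rfl⟩
    exact ⟨⟨r, by rw [length_rotationWord]⟩, length_rotationWord .., hmin⟩

theorem IsInversePair.NFactors_eq_card {n a c : ℕ} (h : IsInversePair (α + β) β a c) (hα : 0 < α)
    (hn : α + β ≤ n) :
    NFactors α β n = (criticalPhases (α + β) β n).card := by
  rw [NFactors, h.setOf_factors_eq_image hα hn,
    Set.ncard_image_of_injective _ (rotationWord_injective (by omega) h.isUnit hn),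
    Set.ncard_coe_finset]

theorem IsInversePair.HFactors_eq_card {n a c : ℕ} (h : IsInversePair (α + β) β a c) (hα : 0 < α)
    (hn : α + β ≤ n) :
    HFactors α β n =
      ((criticalPhases (α + β) β n).filter
        fun r : ZMod (α + β) ↦ (r + n * β).val < r.val).card := by
  have hheavy (r : ZMod (α + β)) : (r + n * β).val < r.val ↔
      (rotationWord (α + β) β n r).count true = n * β / (α + β) + 1 := by
    rw [count_rotationWord_eq_add_ite (by omega)]
    split_ifs with hdrop <;> simp [hdrop]
  have himage : {u | IsOmegaFactor u (lowerChristoffel α β) ∧ u.length = n ∧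
        IsMinPeriod u (α + β) ∧ u.count true = n * β / (α + β) + 1} =
      rotationWord (α + β) β n '' ((criticalPhases (α + β) β n).filter
        fun r ↦ (r + n * β).val < r.val : Finset (ZMod (α + β))) := by
    have hinter := congrArg (· ∩ {u | u.count true = n * β / (α + β) + 1})
      (h.setOf_factors_eq_image hα hn)
    rw [← Set.image_inter_preimage] at hinter
    convert hinter using 1
    · ext u
      simp [and_assoc]
    · ext u
      simp [hheavy]
  rw [HFactors, himage, Set.ncard_image_of_injective _
    (rotationWord_injective (by omega) h.isUnit hn), Set.ncard_coe_finset]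

end Christoffel

section Floor

theorem ceil_intCast_div_natCast_eq_sub_one_ediv_add_one {L : ℕ} (hL : 0 < L) (x : ℤ) :
    ⌈(x : ℚ) / L⌉ = (x - 1) / L + 1 := by
  have hL' : (0 : ℤ) < L := by exact_mod_cast hL
  refine eq_of_forall_ge_iff fun z ↦ ?_
  rw [Int.ceil_le, div_le_iff₀ (by exact_mod_cast hL), Int.add_one_le_iff,
    Int.ediv_lt_iff_lt_mul hL', Int.sub_one_lt_iff]
  norm_cast

theorem sum_floor_add_ceil_eq_sum_ceil_add_floor {R : Type*} [Ring R] [LinearOrder R]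
    [IsStrictOrderedRing R] [FloorRing R] {σ : R} {L b n : ℕ} (hσ : σ * L = b) (hn : L ≤ n) :
    ∑ i ∈ Finset.range (n - L + 1), (⌊σ * (n - i)⌋ + ⌈σ * i⌉) =
      ∑ i ∈ Finset.range (n - L + 1), (⌈σ * (n - i)⌉ + ⌊σ * i⌋) := by
  obtain ⟨k, rfl⟩ := Nat.exists_eq_add_of_le hn
  rw [← Finset.sum_range_reflect, Nat.add_sub_cancel_left]
  refine Finset.sum_congr rfl fun i hi ↦ ?_
  have hik : i ≤ k := Nat.lt_succ_iff.mp (Finset.mem_range.mp hi)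
  have hfloor : σ * ((L + k : ℕ) - (k + 1 - 1 - i : ℕ)) = σ * i + b := by
    rw [Nat.add_sub_cancel, Nat.cast_sub hik, ← hσ, ← mul_add]
    congr 1
    push_cast
    abel
  have hceil : σ * ((L + k : ℕ) - i) = σ * (k + 1 - 1 - i : ℕ) + b := by
    rw [Nat.add_sub_cancel, Nat.cast_sub hik, ← hσ, ← mul_add]
    congr 1
    push_cast
    abel
  rw [hfloor, hceil, Int.floor_add_natCast, Int.ceil_add_natCast]
  ring

variable {L b : ℕ} [NeZero L]

theorem count_rotationWord_intCast (hb : b < L) (n : ℕ) (z : ℤ) :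
    ((rotationWord L b n z).count true : ℤ) = (z + n * b) / L - z / L := by
  have hL : (L : ℤ) ≠ 0 := by exact_mod_cast NeZero.ne L
  have hz : z + n * b = z % L + n * b + L * (z / L) := by
    linarith [Int.emod_add_mul_ediv z L]
  rw [count_rotationWord hb, hz, Int.add_mul_ediv_left _ _ hL, add_sub_cancel_right]
  push_cast
  rw [ZMod.val_intCast]

theorem count_rotationWord_zero_sub (hb : b < L) (n i : ℕ) :
    ((rotationWord L b n (0 - i * b)).count true : ℤ) =
      ⌊(b / L : ℚ) * (n - i)⌋ + ⌈(b / L : ℚ) * i⌉ := by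
  have hphase : (0 - i * b : ZMod L) = ((-(i * b) : ℤ) : ZMod L) := by push_cast; ring
  have hfloor : (b / L : ℚ) * (n - i) = ((-(i * b) + n * b : ℤ) : ℚ) / L := by push_cast; ring
  have hceil : (b / L : ℚ) * i = ((i * b : ℤ) : ℚ) / L := by push_cast; ring
  rw [hphase, count_rotationWord_intCast hb, hfloor, hceil, Rat.floor_intCast_div_natCast,
    Rat.ceil_intCast_div_natCast, sub_eq_add_neg]

theorem count_rotationWord_neg_one_sub (hb : b < L) (n i : ℕ) :
    ((rotationWord L b n (-1 - i * b)).count true : ℤ) =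
      ⌈(b / L : ℚ) * (n - i)⌉ + ⌊(b / L : ℚ) * i⌋ := by
  have hphase : (-1 - i * b : ZMod L) = ((-(i * b) - 1 : ℤ) : ZMod L) := by push_cast; ring
  have hceil : (b / L : ℚ) * (n - i) = ((-(i * b) + n * b : ℤ) : ℚ) / L := by push_cast; ring
  have hfloor : (b / L : ℚ) * i = -(((-(i * b) : ℤ) : ℚ) / L) := by push_cast; ring
  rw [hphase, count_rotationWord_intCast hb, hfloor, hceil, Int.floor_neg,
    ceil_intCast_div_natCast_eq_sub_one_ediv_add_one (NeZero.pos L),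
    ceil_intCast_div_natCast_eq_sub_one_ediv_add_one (NeZero.pos L), sub_add_eq_add_sub]
  ring

theorem sum_count_backwardOrbit_zero (hb : b < L) (hu : IsUnit (b : ZMod L)) (n : ℕ) {m : ℕ}
    (hm : m ≤ L) :
    ∑ r ∈ backwardOrbit b (0 : ZMod L) m, ((rotationWord L b n r).count true : ℤ) =
      ∑ i ∈ Finset.range m, (⌊(b / L : ℚ) * (n - i)⌋ + ⌈(b / L : ℚ) * i⌉) := by
  simp only [sum_backwardOrbit hu _ hm, count_rotationWord_zero_sub hb]

theorem sum_count_backwardOrbit_neg_one (hb : b < L) (hu : IsUnit (b : ZMod L)) (n : ℕ) {m : ℕ}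
    (hm : m ≤ L) :
    ∑ r ∈ backwardOrbit b (-1 : ZMod L) m, ((rotationWord L b n r).count true : ℤ) =
      ∑ i ∈ Finset.range m, (⌈(b / L : ℚ) * (n - i)⌉ + ⌊(b / L : ℚ) * i⌋) := by
  simp only [sum_backwardOrbit hu _ hm, count_rotationWord_neg_one_sub hb]

end Floor

theorem HFactors_le_NFactors (α β n : ℕ) : HFactors α β n ≤ NFactors α β n :=
  Set.ncard_le_ncard (fun _ hu ↦ ⟨hu.1, hu.2.1, hu.2.2.1⟩)
    ((List.finite_length_eq Bool n).subset fun _ hu ↦ hu.2.1)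

namespace IsInversePair

variable {L b α β n a c : ℕ}

theorem criticalPhases_eq_backwardOrbit_zero (h : IsInversePair L b a c) (hn : L + c ≤ n) :
    criticalPhases L b n = backwardOrbit b 0 (n - a + 1) := by
  have hsum := h.add_eq
  have hneg : (-1 : ZMod L) = 0 - c * b := by rw [h.right_mul_eq_one, zero_sub]
  rw [criticalPhases, hneg, backwardOrbit_union_backwardOrbit_sub _ (by omega)]
  congr 1
  omega

theorem criticalPhases_eq_backwardOrbit_neg_one (h : IsInversePair L b a c) (hn : L + a ≤ n) :
    criticalPhases L b n = backwardOrbit b (-1) (n - c + 1) := by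
  have hsum := h.add_eq
  have hzero : (0 : ZMod L) = -1 - a * b := by
    rw [mul_eq_neg_one_of_add_eq h.add_eq h.right_mul_eq_one, sub_self]
  rw [criticalPhases, Finset.union_comm, hzero, backwardOrbit_union_backwardOrbit_sub _ (by omega)]
  congr 1
  omega

theorem of_mul_mod_eq_one (ha0 : 0 < a) (haL : a < α + β) (hc0 : 0 < c) (hcL : c < α + β)
    (ha : α * a % (α + β) = 1) (hc : β * c % (α + β) = 1) : IsInversePair (α + β) β a c := by
  have hc1 : (c : ZMod (α + β)) * β = 1 := by
    rw [← Nat.cast_mul, mul_comm, ← ZMod.natCast_mod, hc, Nat.cast_one]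
  have ha1 : (a : ZMod (α + β)) * α = 1 := by
    rw [← Nat.cast_mul, mul_comm, ← ZMod.natCast_mod, ha, Nat.cast_one]
  have hαβ : (α : ZMod (α + β)) + β = 0 := by rw [← Nat.cast_add, ZMod.natCast_self]
  have hsum : ((a + c : ℕ) : ZMod (α + β)) = 0 := by
    push_cast
    linear_combination (c : ZMod (α + β)) * a * hαβ - (a : ZMod (α + β)) * hc1 - c * ha1
  have hdvd : α + β ∣ a + c := (ZMod.natCast_eq_zero_iff _ _).mp hsum
  have hac : a + c = α + β := by
    have hsub := Nat.eq_zero_of_dvd_of_lt (Nat.dvd_sub hdvd dvd_rfl) (by omega)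
    have := Nat.le_of_dvd (by omega) hdvd
    omega
  exact ⟨ha0, hc0, hac, hc1⟩

variable [NeZero (α + β)]

theorem HFactors_eq_sum_count_sub (h : IsInversePair (α + β) β a c) (hα : 0 < α)
    (hn : α + β ≤ n) :
    (HFactors α β n : ℤ) =
      ∑ r ∈ criticalPhases (α + β) β n, ((rotationWord (α + β) β n r).count true : ℤ) -
        ⌊(β / (α + β : ℕ) : ℚ) * n⌋ * NFactors α β n := by
  have hfloor : ⌊(β / (α + β : ℕ) : ℚ) * n⌋ = (n * β / (α + β) : ℕ) := by
    rw [div_mul_eq_mul_div, mul_comm, ← Nat.cast_mul, Rat.floor_natCast_div_natCast]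
    rfl
  have hcount (r : ZMod (α + β)) := count_rotationWord_eq_add_ite (show β < α + β by omega) n r
  rw [hfloor, h.HFactors_eq_card hα hn, h.NFactors_eq_card hα hn]
  simp only [hcount, Nat.cast_add (_ / _), Finset.sum_add_distrib, Finset.sum_const, nsmul_eq_mul,
    Nat.cast_ite, Nat.cast_one, Nat.cast_zero, Finset.sum_boole]
  ring

theorem HFactors_eq_of_lt_add_min (h : IsInversePair (α + β) β a c) (hα : 0 < α)
    (hn : α + β ≤ n) (hlt : n < α + β + min a c) :
    (HFactors α β n : ℤ) =
      2 * (∑ i ∈ Finset.range (n - (α + β) + 1),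
        (⌈(β / (α + β : ℕ) : ℚ) * (n - i)⌉ + ⌊(β / (α + β : ℕ) : ℚ) * i⌋)) -
      ⌊(β / (α + β : ℕ) : ℚ) * n⌋ * NFactors α β n := by
  have hsum := h.add_eq
  have hβ : β < α + β := by omega
  have hσ : (β / (α + β : ℕ) : ℚ) * (α + β : ℕ) = β :=
    div_mul_cancel₀ _ (by exact_mod_cast NeZero.ne (α + β))
  rw [h.HFactors_eq_sum_count_sub hα hn, criticalPhases, Finset.sum_union
      (disjoint_backwardOrbit_zero_neg_one h.add_eq h.right_mul_eq_one (by omega) (by omega)),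
    sum_count_backwardOrbit_zero hβ h.isUnit n (by omega),
    sum_count_backwardOrbit_neg_one hβ h.isUnit n (by omega),
    sum_floor_add_ceil_eq_sum_ceil_add_floor hσ hn, two_mul]

theorem HFactors_eq_of_add_right_le (h : IsInversePair (α + β) β a c) (hα : 0 < α)
    (hn : α + β + c ≤ n) (hlt : n < α + β + a) :
    (HFactors α β n : ℤ) =
      (∑ i ∈ Finset.range (n - a + 1),
        (⌊(β / (α + β : ℕ) : ℚ) * (n - i)⌋ + ⌈(β / (α + β : ℕ) : ℚ) * i⌉)) -
      ⌊(β / (α + β : ℕ) : ℚ) * n⌋ * NFactors α β n := by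
  rw [h.HFactors_eq_sum_count_sub hα (by omega), h.criticalPhases_eq_backwardOrbit_zero hn,
    sum_count_backwardOrbit_zero (by omega) h.isUnit n (by omega)]

theorem HFactors_eq_of_add_left_le (h : IsInversePair (α + β) β a c) (hα : 0 < α)
    (hn : α + β + a ≤ n) (hlt : n < α + β + c) :
    (HFactors α β n : ℤ) =
      (∑ i ∈ Finset.range (n - c + 1),
        (⌈(β / (α + β : ℕ) : ℚ) * (n - i)⌉ + ⌊(β / (α + β : ℕ) : ℚ) * i⌋)) -
      ⌊(β / (α + β : ℕ) : ℚ) * n⌋ * NFactors α β n := by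
  rw [h.HFactors_eq_sum_count_sub hα (by omega), h.criticalPhases_eq_backwardOrbit_neg_one hn,
    sum_count_backwardOrbit_neg_one (by omega) h.isUnit n (by omega)]

theorem HFactors_eq_of_add_max_le (h : IsInversePair (α + β) β a c) (hα : 0 < α)
    (hn : α + β + max a c ≤ n) : HFactors α β n = n * β % (α + β) := by
  rw [h.HFactors_eq_card hα (by omega), h.criticalPhases_eq_backwardOrbit_zero (by omega),
    backwardOrbit_eq_univ h.isUnit _ (by omega), card_filter_val_add_lt_val, ← Nat.cast_mul,
    ZMod.val_natCast]

end IsInversePair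

/-- Closed formula for `H_{α,β}(n)`; here `σ = β/(α+β)` and `a'`, `b'` are
the multiplicative inverses of `α`, `β` modulo `α + β`, taken in `{1, …, α+β−1}`. -/
theorem stmt11 (α β n a' b' : ℕ) (hα : 0 < α) (hβ : 0 < β) (hn : 0 < n)
    (ha' : Nat.Coprime α β → 1 ≤ a' ∧ a' ≤ α + β - 1 ∧ α * a' % (α + β) = 1)
    (hb' : Nat.Coprime α β → 1 ≤ b' ∧ b' ≤ α + β - 1 ∧ β * b' % (α + β) = 1) :
    (NFactors α β n = 0 → HFactors α β n = 0) ∧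
    (Nat.Coprime α β → α + β ≤ n → n < α + β + min a' b' →
      (HFactors α β n : ℤ) =
        2 * (∑ i ∈ Finset.range (n - α - β + 1),
          (⌈((β : ℚ) / (α + β)) * ((n : ℚ) - (i : ℚ))⌉ + ⌊((β : ℚ) / (α + β)) * (i : ℚ)⌋))
        - ⌊((β : ℚ) / (α + β)) * (n : ℚ)⌋ * (NFactors α β n : ℤ)) ∧
    (Nat.Coprime α β → α + β + b' ≤ n → n < α + β + a' →
      (HFactors α β n : ℤ) =
        (∑ i ∈ Finset.range (n - a' + 1),
          (⌊((β : ℚ) / (α + β)) * ((n : ℚ) - (i : ℚ))⌋ + ⌈((β : ℚ) / (α + β)) * (i : ℚ)⌉))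
        - ⌊((β : ℚ) / (α + β)) * (n : ℚ)⌋ * (NFactors α β n : ℤ)) ∧
    (Nat.Coprime α β → α + β + a' ≤ n → n < α + β + b' →
      (HFactors α β n : ℤ) =
        (∑ i ∈ Finset.range (n - b' + 1),
          (⌈((β : ℚ) / (α + β)) * ((n : ℚ) - (i : ℚ))⌉ + ⌊((β : ℚ) / (α + β)) * (i : ℚ)⌋))
        - ⌊((β : ℚ) / (α + β)) * (n : ℚ)⌋ * (NFactors α β n : ℤ)) ∧
    (Nat.Coprime α β → α + β + max a' b' ≤ n →
      HFactors α β n = n * β % (α + β)) := by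
  have : NeZero (α + β) := ⟨by omega⟩
  have hpair (hαβ : Nat.Coprime α β) : IsInversePair (α + β) β a' b' := by
    obtain ⟨ha0, haL, ha⟩ := ha' hαβ
    obtain ⟨hb0, hbL, hb⟩ := hb' hαβ
    exact .of_mul_mod_eq_one ha0 (by omega) hb0 (by omega) ha hb
  simp only [← Nat.cast_add, Nat.sub_sub]
  exact ⟨fun hN ↦ Nat.eq_zero_of_le_zero (hN ▸ HFactors_le_NFactors α β n),
    fun hαβ ↦ (hpair hαβ).HFactors_eq_of_lt_add_min hα,
    fun hαβ ↦ (hpair hαβ).HFactors_eq_of_add_right_le hα,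
    fun hαβ ↦ (hpair hαβ).HFactors_eq_of_add_left_le hα,
    fun hαβ ↦ (hpair hαβ).HFactors_eq_of_add_max_le hα⟩
end

section
/- For all positive integers a and b, the number of balanced binary words with Parikh vector (a,b) equals Σ_{α=1}^{a} Σ_{β positive integer with α(b−1)/(a+1) < β ≤ αb/a} H_{α,β}(a+b) + Σ_{β=1}^{b} Σ_{α positive integer with β(a−1)/(b+1) < α ≤ βa/b} (N_{α,β}(a+b) − H_{α,β}(a+b)). Moreover, if exactly one of a, b is zero, the number of balanced binary words with Parikh vector (a,b) equals 1. -/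
/-!
A word is balanced exactly when the graph of its prefix counts stays in a strip of vertical width
less than `1` around a line of some rational slope `h / p`, and the words in such a strip are the
factors of `w_{p-h,h}^ω`. Take the least possible denominator `p`. Since neither Farey neighbour of
`h / p` is a slope, the word runs from the top of the strip to its bottom and also, elsewhere, from
the bottom to the top. Positions with equal discrepancy are congruent modulo `p`, so this leaves no
room for `n < p` or for a shorter period: `p` is the minimal period, and a balanced word is a factor
of minimal period `α + β` of `w_{α,β}^ω` for a unique pair `(α, β)`.

Given `(α, β)`, the number of letters `1` in a factor of length `a + b` is one of two consecutive
integers, and comparing `αb` with `βa` decides whether `b` is the larger one, the smaller one or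
neither. On the line `αb = βa` no factor is heavy, so the overlap of the two sums is harmless.
-/

/-- The excess, scaled by `p`, of the sequence `S` over the line of slope `h / p`. -/
def discrepancy (S : ℕ → ℤ) (p : ℕ) (h : ℤ) (i : ℕ) : ℤ := p * S i - h * i

/-- The fraction `h / p` is a slope of `S` on `[0, n]` if the graph of `S` over `[0, n]` stays in a
strip of vertical width less than `1` around a line of that slope. This forces `0 < p`, but `h / p`
need not be in lowest terms. -/
def IsSlope (S : ℕ → ℤ) (n p : ℕ) (h : ℤ) : Prop :=
  ∀ i ≤ n, ∀ j ≤ n, discrepancy S p h j < discrepancy S p h i + p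

/-- A slope `h / p` of `S` on `[0, n]` with the least possible denominator. -/
structure IsMinSlope (S : ℕ → ℤ) (n p : ℕ) (h : ℤ) : Prop where
  isSlope : IsSlope S n p h
  le : ∀ p' h', IsSlope S n p' h' → p ≤ p'

/-- The analogue of `BalancedWord` for integer sequences on `[0, n]`: increments over windows of
equal length differ by at most `1`. -/
def BalancedUpTo (S : ℕ → ℤ) (n : ℕ) : Prop :=
  ∀ i j k, i + k ≤ n → j + k ≤ n → S (i + k) - S i ≤ S (j + k) - S j + 1

section Slopes

variable {S : ℕ → ℤ} {n p : ℕ} {h : ℤ}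

lemma discrepancy_neg (i : ℕ) : discrepancy (-S) p (-h) i = -discrepancy S p h i := by
  simp only [discrepancy, Pi.neg_apply]
  ring

lemma discrepancy_add (i k : ℕ) :
    discrepancy S p h (i + k) = discrepancy S p h i + (p * (S (i + k) - S i) - h * k) := by
  simp only [discrepancy]
  push_cast
  ring

lemma IsSlope.pos (H : IsSlope S n p h) : 0 < p := by
  have := H 0 n.zero_le 0 n.zero_le
  omega

lemma IsSlope.neg (H : IsSlope S n p h) : IsSlope (-S) n p (-h) := by
  intro i hi j hj
  have := H j hj i hi
  rw [discrepancy_neg, discrepancy_neg]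
  linarith

lemma IsSlope.abs_mul_sub_lt (H : IsSlope S n p h) {i k : ℕ} (hk : i + k ≤ n) :
    |p * (S (i + k) - S i) - h * k| < p := by
  have upper := H i (by omega) (i + k) hk
  have lower := H (i + k) hk i (by omega)
  rw [discrepancy_add] at upper lower
  rw [abs_lt]
  constructor <;> linarith

lemma IsSlope.apply_add (H : IsSlope S n p h) {i : ℕ} (hi : i + p ≤ n) : S (i + p) = S i + h := by
  have hlt := H.abs_mul_sub_lt hi
  have hdvd : (p : ℤ) ∣ p * (S (i + p) - S i) - h * p := ⟨S (i + p) - S i - h, by ring⟩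
  have hzero := Int.eq_zero_of_abs_lt_dvd hdvd hlt
  have hp : (p : ℤ) ≠ 0 := by exact_mod_cast H.pos.ne'
  apply mul_left_cancel₀ hp
  linarith

lemma IsSlope.balancedUpTo (H : IsSlope S n p h) : BalancedUpTo S n := by
  intro i j k hi hj
  have hi' := (abs_lt.1 (H.abs_mul_sub_lt hi)).2
  have hj' := (abs_lt.1 (H.abs_mul_sub_lt hj)).1
  have hlt : (p : ℤ) * (S (i + k) - S i) < p * (S (j + k) - S j + 2) := by linarith
  have := lt_of_mul_lt_mul_left hlt (by positivity)
  omega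

/-- The starting phase is `p - 1` times the position where the discrepancy is largest: there `S`
meets the line bounding the strip from above. -/
lemma IsSlope.exists_eq_floor (H : IsSlope S n p h) :
    ∃ s : ℕ, ∀ i ≤ n, S i = S 0 + ((s + i) * h / p - s * h / p) := by
  obtain ⟨m, hm, hmax⟩ :=
    Finset.exists_max_image (Finset.range (n + 1)) (discrepancy S p h) ⟨0, by simp⟩
  simp only [Finset.mem_range, Nat.lt_succ_iff] at hm hmax
  have hp : 0 < p := H.pos
  have floor_eq : ∀ i ≤ n, (((m * (p - 1) : ℕ) : ℤ) + i) * h / p = S i - S m + m * h := by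
    intro i hi
    have upper := hmax i hi
    have lower := H i hi m hm
    rw [Int.ediv_eq_iff_of_pos (by exact_mod_cast hp)]
    simp only [discrepancy] at upper lower
    push_cast [Nat.cast_sub (show 1 ≤ p from hp)]
    constructor <;> linarith
  refine ⟨m * (p - 1), fun i hi => ?_⟩
  have floor_zero := floor_eq 0 n.zero_le
  rw [Nat.cast_zero, add_zero] at floor_zero
  rw [floor_eq i hi, floor_zero]
  ring

lemma isSlope_of_eq_floor (hp : 0 < p) {s : ℕ} {c : ℤ}
    (hS : ∀ i ≤ n, S i = (s + i) * h / p - c) : IsSlope S n p h := by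
  have hp' : (0 : ℤ) < p := by exact_mod_cast hp
  have discrepancy_eq : ∀ i ≤ n, discrepancy S p h i = s * h - p * c - ((s + i) * h) % p := by
    intro i hi
    rw [discrepancy, hS i hi]
    linarith [Int.mul_ediv_add_emod ((s + i) * h) p]
  intro i hi j hj
  rw [discrepancy_eq i hi, discrepancy_eq j hj]
  linarith [Int.emod_lt_of_pos ((s + i) * h) hp', Int.emod_nonneg ((s + j) * h) hp'.ne']

/-- A Euclidean induction: subtracting the shorter window from the longer one keeps the
inequality. -/
lemma BalancedUpTo.mul_sub_one_lt_mul_add_one (hS : BalancedUpTo S n) (u v i j : ℕ) (hu : 0 < u)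
    (hv : 0 < v) (hi : i + u ≤ n) (hj : j + v ≤ n) :
    v * (S (i + u) - S i - 1) < u * (S (j + v) - S j + 1) := by
  rcases lt_trichotomy u v with huv | rfl | huv
  · obtain ⟨w, rfl⟩ := Nat.exists_eq_add_of_lt huv
    have rest := hS.mul_sub_one_lt_mul_add_one u (w + 1) i (j + u) hu (by omega) hi (by omega)
    have short := hS i j u hi (by omega)
    rw [show j + u + (w + 1) = j + (u + w + 1) by ring] at rest
    push_cast at rest ⊢
    nlinarith
  · have := hS i j u hi hj
    nlinarith
  · obtain ⟨w, rfl⟩ := Nat.exists_eq_add_of_lt huv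
    have rest := hS.mul_sub_one_lt_mul_add_one (w + 1) v (i + v) j (by omega) hv (by omega) hj
    have short := hS i j v (by omega) hj
    rw [show i + v + (w + 1) = i + (v + w + 1) by ring] at rest
    push_cast at rest ⊢
    nlinarith
termination_by u + v

lemma BalancedUpTo.div_lt_div (hS : BalancedUpTo S n) {i j i' j' : ℕ} (hij : i < j) (hj : j ≤ n)
    (hij' : i' < j') (hj' : j' ≤ n) :
    (S j - S i - 1 : ℚ) / (j - i) < (S j' - S i' + 1) / (j' - i') := by
  have key := hS.mul_sub_one_lt_mul_add_one (j - i) (j' - i') i i' (by omega) (by omega)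
    (by omega) (by omega)
  rw [Nat.add_sub_cancel' hij.le, Nat.add_sub_cancel' hij'.le, Nat.cast_sub hij.le,
    Nat.cast_sub hij'.le, ← Int.cast_lt (R := ℚ)] at key
  push_cast at key
  rw [div_lt_div_iff₀ (sub_pos.2 (by exact_mod_cast hij)) (sub_pos.2 (by exact_mod_cast hij'))]
  linarith

lemma BalancedUpTo.exists_rat (hS : BalancedUpTo S n) :
    ∃ θ : ℚ, ∀ i j, i < j → j ≤ n →
      S j - S i - 1 < θ * (j - i) ∧ θ * (j - i) < S j - S i + 1 := by
  let windows : Finset (ℕ × ℕ) :=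
    (Finset.range (n + 1) ×ˢ Finset.range (n + 1)).filter fun x => x.1 < x.2
  have mem_windows {x : ℕ × ℕ} : x ∈ windows ↔ x.1 < x.2 ∧ x.2 ≤ n := by
    simp only [windows, Finset.mem_filter, Finset.mem_product, Finset.mem_range]
    omega
  obtain ⟨θ, hlower, hupper⟩ := Order.exists_between_finsets
    (windows.image fun x => (S x.2 - S x.1 - 1 : ℚ) / (x.2 - x.1))
    (windows.image fun x => (S x.2 - S x.1 + 1 : ℚ) / (x.2 - x.1)) (by
      simp only [Finset.forall_mem_image, mem_windows]
      exact fun _ hx _ hy => hS.div_lt_div hx.1 hx.2 hy.1 hy.2)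
  simp only [Finset.forall_mem_image, mem_windows] at hlower hupper
  refine ⟨θ, fun i j hij hj => ?_⟩
  have hpos : (0 : ℚ) < j - i := sub_pos.2 (by exact_mod_cast hij)
  exact ⟨(div_lt_iff₀ hpos).1 (@hlower (i, j) ⟨hij, hj⟩),
    (lt_div_iff₀ hpos).1 (@hupper (i, j) ⟨hij, hj⟩)⟩

lemma BalancedUpTo.exists_isSlope (hS : BalancedUpTo S n) : ∃ p h, IsSlope S n p h := by
  obtain ⟨θ, hθ⟩ := hS.exists_rat
  have hden : (0 : ℚ) < θ.den := by exact_mod_cast θ.den_pos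
  refine ⟨θ.den, θ.num, fun i hi j hj => ?_⟩
  suffices (θ.den * (S j - S i) : ℚ) < θ.den * (θ * (j - i) + 1) by
    have hnum : (θ.num : ℚ) = θ.den * θ := θ.den_mul_eq_num.symm
    rw [discrepancy, discrepancy, ← Int.cast_lt (R := ℚ)]
    push_cast
    rw [hnum]
    linarith
  rw [mul_lt_mul_iff_right₀ hden]
  rcases lt_trichotomy i j with hij | rfl | hij
  · linarith [(hθ i j hij hj).1]
  · linarith
  · linarith [(hθ j i hij hi).2]

lemma BalancedUpTo.exists_isMinSlope (hS : BalancedUpTo S n) : ∃ p h, IsMinSlope S n p h := by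
  classical
  have hex := hS.exists_isSlope
  obtain ⟨h, H⟩ := Nat.find_spec hex
  exact ⟨Nat.find hex, h, H, fun p' h' H' => Nat.find_min' hex ⟨h', H'⟩⟩

lemma IsMinSlope.neg (H : IsMinSlope S n p h) : IsMinSlope (-S) n p (-h) where
  isSlope := H.isSlope.neg
  le p' h' H' := H.le p' (-h') (by simpa only [neg_neg] using H'.neg)

lemma IsMinSlope.isCoprime (H : IsMinSlope S n p h) : IsCoprime h (p : ℤ) := by
  rw [Int.isCoprime_iff_gcd_eq_one]
  have hp := H.isSlope.pos
  have hg : 0 < Int.gcd h p := Int.gcd_pos_of_ne_zero_right _ (by exact_mod_cast hp.ne')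
  obtain ⟨h', hh'⟩ : (Int.gcd h p : ℤ) ∣ h := Int.gcd_dvd_left ..
  obtain ⟨p', hp'⟩ : Int.gcd h p ∣ p := by exact_mod_cast Int.gcd_dvd_right h p
  generalize Int.gcd h p = g at hg hh' hp'
  subst hh' hp'
  have reduced : IsSlope S n p' h' := by
    intro i hi j hj
    have := H.isSlope i hi j hj
    simp only [discrepancy] at this ⊢
    push_cast at this
    refine lt_of_mul_lt_mul_left ?_ (Int.natCast_nonneg g)
    linarith
  have hle : g * p' ≤ 1 * p' := by simpa only [one_mul] using H.le p' h' reduced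
  have := Nat.le_of_mul_le_mul_right hle (Nat.pos_of_mul_pos_left hp)
  omega

lemma exists_mul_sub_mul_eq_one (hp : 1 < p) (hc : IsCoprime h (p : ℤ)) :
    ∃ (s : ℕ) (B : ℤ), 0 < s ∧ s < p ∧ p * B - h * s = 1 := by
  obtain ⟨u, v, huv⟩ := hc
  have hp' : (0 : ℤ) < p := by omega
  have hdiv := Int.mul_ediv_add_emod (-u) p
  have hnonneg := Int.emod_nonneg (-u) hp'.ne'
  have hlt := Int.emod_lt_of_pos (-u) hp'
  have hbezout : p * (v - h * (-u / p)) - h * (-u % p) = 1 := by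
    linear_combination huv - h * hdiv
  have hne : -u % p ≠ 0 := by
    intro h0
    rw [h0, mul_zero, sub_zero] at hbezout
    have := Int.le_of_dvd one_pos ⟨_, hbezout.symm⟩
    omega
  refine ⟨(-u % p).toNat, v - h * (-u / p), by omega, by omega, ?_⟩
  rwa [Int.toNat_of_nonneg hnonneg]

lemma modEq_of_discrepancy_eq (hc : IsCoprime h (p : ℤ)) {i j : ℕ}
    (hD : discrepancy S p h i = discrepancy S p h j) : i ≡ j [MOD p] := by
  rw [Nat.modEq_iff_dvd]
  refine hc.symm.dvd_of_dvd_mul_left ⟨S j - S i, ?_⟩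
  simp only [discrepancy] at hD
  linear_combination hD

lemma IsSlope.sub_eq_or_eq_sub_one (H : IsSlope S n p h) (hp : 1 < p) {s : ℕ} {B : ℤ}
    (hB : p * B - h * s = 1) {i : ℕ} (hi : i + s ≤ n) :
    S (i + s) - S i = B ∨ S (i + s) - S i = B - 1 := by
  have hlt := abs_lt.1 (H.abs_mul_sub_lt hi)
  have upper : S (i + s) - S i < B + 1 := by nlinarith
  have lower : B - 2 < S (i + s) - S i := by nlinarith
  omega

/-- Let `B / s` be the right Farey neighbour of `h / p`. If every window of length `s` had
increment at least `B`, then `s * S i - B * i` would be `s`-periodic, and shifting a pair which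
shows that `B / s` is not a slope would produce such pairs arbitrarily far to the right. So some
window has increment `B - 1`. -/
lemma IsMinSlope.exists_discrepancy_drop (H : IsMinSlope S n p h) (hp : 1 < p) :
    ∃ i j, i < j ∧ j ≤ n ∧ discrepancy S p h i = discrepancy S p h j + (p - 1) := by
  obtain ⟨s, B, hs, hsp, hB⟩ := exists_mul_sub_mul_eq_one hp H.isCoprime
  have relation (x : ℕ) : s * discrepancy S p h x = p * discrepancy S s B x + x := by
    simp only [discrepancy]
    linear_combination x * hB
  by_contra! no_drop
  have step (x : ℕ) (hx : x + s ≤ n) : discrepancy S s B (x + s) = discrepancy S s B x := by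
    rcases H.isSlope.sub_eq_or_eq_sub_one hp hB hx with heq | heq
    · rw [discrepancy_add, heq]
      ring
    · refine absurd ?_ (no_drop x (x + s) (by omega) hx)
      rw [discrepancy_add, heq]
      linear_combination -hB
  have not_slope : ¬ IsSlope S n s B := fun hsB => by
    have := H.le s B hsB
    omega
  simp only [IsSlope, not_forall, not_lt] at not_slope
  obtain ⟨y, hy, x, hx, hxy⟩ := not_slope
  have room {x : ℕ} (hx : x ≤ n) (hxy : discrepancy S s B y + s ≤ discrepancy S s B x) :
      x + s ≤ y := by
    have hlt := H.isSlope y hy x hx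
    have := relation x
    have := relation y
    zify
    nlinarith
  have shifted (m : ℕ) : x + m * s ≤ n ∧
      discrepancy S s B y + s ≤ discrepancy S s B (x + m * s) := by
    induction m with
    | zero => simpa using ⟨hx, hxy⟩
    | succ m ih =>
      have hle := (room ih.1 ih.2).trans hy
      rw [add_one_mul, ← add_assoc]
      exact ⟨hle, by rw [step _ hle]; exact ih.2⟩
  have := (shifted (n + 1)).1
  nlinarith

lemma IsMinSlope.exists_extremes (H : IsMinSlope S n p h) (hp : 1 < p) :
    ∃ i j i' j', i < j ∧ j ≤ n ∧ i' < j' ∧ j' ≤ n ∧ i ≡ j' [MOD p] ∧ j ≡ i' [MOD p] ∧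
      (∀ k ≤ n, discrepancy S p h k ≤ discrepancy S p h i ∧
        discrepancy S p h k ≤ discrepancy S p h j') ∧
      (∀ k ≤ n, discrepancy S p h j ≤ discrepancy S p h k ∧
        discrepancy S p h i' ≤ discrepancy S p h k) := by
  obtain ⟨i, j, hij, hj, drop⟩ := H.exists_discrepancy_drop hp
  obtain ⟨i', j', hij', hj', rise⟩ := H.neg.exists_discrepancy_drop hp
  rw [discrepancy_neg, discrepancy_neg] at rise
  have top := H.isSlope j hj j' hj'
  have bottom := H.isSlope i' (by omega) i (by omega)
  have hmax : discrepancy S p h i = discrepancy S p h j' := by omega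
  have hmin : discrepancy S p h j = discrepancy S p h i' := by omega
  refine ⟨i, j, i', j', hij, hj, hij', hj', modEq_of_discrepancy_eq H.isCoprime hmax,
    modEq_of_discrepancy_eq H.isCoprime hmin, fun k hk => ?_, fun k hk => ?_⟩
  · have := H.isSlope j hj k hk
    omega
  · have := H.isSlope k hk i (by omega)
    omega

lemma IsMinSlope.le_length (H : IsMinSlope S n p h) (hn : 0 < n) : p ≤ n := by
  by_contra! hnp
  obtain ⟨i, j, i', j', hij, hj, hij', hj', hmax, hmin, -, -⟩ := H.exists_extremes (by omega)
  have := hmax.eq_of_lt_of_lt (by omega) (by omega)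
  have := hmin.eq_of_lt_of_lt (by omega) (by omega)
  omega

/-- A shift by `q < p` changes the discrepancy by a nonzero constant, so it moves the extreme
positions out of `[0, n]`. They then lie so close to each other that the congruences between them
are equalities, which contradicts their order. -/
lemma IsMinSlope.le_of_apply_add (H : IsMinSlope S n p h) {q : ℕ} (hq : 0 < q) {g : ℤ}
    (hper : ∀ i, i + q ≤ n → S (i + q) = S i + g) : p ≤ q := by
  by_contra! hqp
  have shift_ne : p * g - h * q ≠ 0 := by
    intro h0
    have hdvd : (p : ℤ) ∣ q := H.isCoprime.symm.dvd_of_dvd_mul_left ⟨g, by linarith⟩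
    have := Nat.le_of_dvd hq (by exact_mod_cast hdvd)
    omega
  wlog shift_pos : 0 < p * g - h * q generalizing S h g
  · refine this H.neg (g := -g) (fun i hi => ?_) (fun h0 => shift_ne ?_) ?_
    · rw [Pi.neg_apply, Pi.neg_apply, hper i hi, neg_add]
    · linarith
    · have : p * g - h * q < 0 := by omega
      linarith
  obtain ⟨i, j, i', j', hij, hj, hij', hj', hmax, hmin, le_max, min_le⟩ :=
    H.exists_extremes (by omega)
  have shift {k : ℕ} (hk : k + q ≤ n) : discrepancy S p h k < discrepancy S p h (k + q) := by
    rw [discrepancy_add, hper k hk, add_sub_cancel_left]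
    omega
  have hi : n < i + q := by
    by_contra! hle
    exact (shift hle).not_ge (le_max _ hle).1
  have hj'_right : n < j' + q := by
    by_contra! hle
    exact (shift hle).not_ge (le_max _ hle).2
  have hj_left : j < q := by
    by_contra! hle
    obtain ⟨k, rfl⟩ := Nat.exists_eq_add_of_le' hle
    exact (shift hj).not_ge (min_le k (by omega)).1
  have hi' : i' < q := by
    by_contra! hle
    obtain ⟨k, rfl⟩ := Nat.exists_eq_add_of_le' hle
    exact (shift (by omega)).not_ge (min_le k (by omega)).2
  have hmax_eq : i = j' := hmax.eq_of_abs_lt (abs_lt.2 ⟨by omega, by omega⟩)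
  have hmin_eq : j = i' := hmin.eq_of_lt_of_lt (by omega) (by omega)
  omega

end Slopes

/-- The number of letters `1` among the first `i` letters of `w`, as an integer so that increments
can be subtracted. -/
def prefixCount (w : List Bool) (i : ℕ) : ℤ := (w.take i).count true

lemma eq_of_toInt_eq {x y : Bool} (h : x.toInt = y.toInt) : x = y := by
  cases x <;> cases y <;> simp_all

section PrefixCount

variable {w : List Bool}

lemma prefixCount_zero : prefixCount w 0 = 0 := by simp [prefixCount]

lemma prefixCount_length : prefixCount w w.length = w.count true := by simp [prefixCount]

lemma prefixCount_succ {i : ℕ} (hi : i < w.length) :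
    prefixCount w (i + 1) = prefixCount w i + (w.getD i false).toInt := by
  rw [prefixCount, prefixCount, List.take_add_one, List.count_append,
    List.getD_eq_getElem _ _ hi, List.getElem?_eq_getElem hi]
  cases w[i] <;> simp

lemma prefixCount_add_sub (i k : ℕ) :
    prefixCount w (i + k) - prefixCount w i = ((w.drop i).take k).count true := by
  rw [prefixCount, prefixCount, List.take_add, List.count_append]
  push_cast
  ring

lemma prefixCount_add_sub_mem_Icc (i k : ℕ) :
    prefixCount w (i + k) - prefixCount w i ∈ Set.Icc (0 : ℤ) k := by
  rw [prefixCount_add_sub]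
  have : ((w.drop i).take k).count true ≤ k := List.count_le_length.trans (List.length_take_le ..)
  exact ⟨by positivity, by exact_mod_cast this⟩

lemma balancedWord_iff : BalancedWord w ↔ BalancedUpTo (prefixCount w) w.length := by
  constructor
  · intro hw i j k hi hj
    have window_infix (i : ℕ) : (w.drop i).take k <:+: w :=
      (List.take_prefix _ _).isInfix.trans (List.drop_suffix _ _).isInfix
    have := hw _ _ (window_infix i) (window_infix j) (by
      simp only [List.length_take, List.length_drop]
      omega)
    rw [← prefixCount_add_sub, ← prefixCount_add_sub] at this
    linarith [(abs_le.1 this).2]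
  · intro hw u v hu hv huv
    have window_of_infix {u : List Bool} (hu : u <:+: w) :
        ∃ i, i + u.length ≤ w.length ∧
          (u.count true : ℤ) = prefixCount w (i + u.length) - prefixCount w i := by
      obtain ⟨s, t, rfl⟩ := hu
      exact ⟨s.length, by simp, by simp [prefixCount_add_sub]⟩
    obtain ⟨i, hi, hu⟩ := window_of_infix hu
    obtain ⟨j, hj, hv⟩ := window_of_infix hv
    rw [← huv] at hj hv
    rw [hu, hv, abs_le]
    have := hw i j _ hi hj
    have := hw j i _ hj hi
    constructor <;> linarith

lemma HasPeriod.prefixCount_add {q : ℕ} (hq : HasPeriod w q) {i : ℕ} (hi : i + q ≤ w.length) :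
    prefixCount w (i + q) = prefixCount w i + prefixCount w q := by
  induction i with
  | zero => rw [zero_add, prefixCount_zero, zero_add]
  | succ i ih =>
    rw [add_right_comm, prefixCount_succ (by omega), prefixCount_succ (by omega), ih (by omega),
      hq.2 i (by omega)]
    ring

lemma hasPeriod_of_prefixCount_add {q : ℕ} (hq : 0 < q) {g : ℤ}
    (h : ∀ i, i + q ≤ w.length → prefixCount w (i + q) = prefixCount w i + g) : HasPeriod w q := by
  refine ⟨hq, fun i hi => ?_⟩
  have hsucc := h (i + 1) (by omega)
  rw [add_right_comm, prefixCount_succ hi, prefixCount_succ (by omega), h i (by omega)] at hsucc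
  exact eq_of_toInt_eq (by linarith)

lemma IsSlope.hasPeriod {p : ℕ} {h : ℤ} (H : IsSlope (prefixCount w) w.length p h) :
    HasPeriod w p :=
  hasPeriod_of_prefixCount_add H.pos fun _ => H.apply_add

lemma IsMinSlope.isMinPeriod {p : ℕ} {h : ℤ} (H : IsMinSlope (prefixCount w) w.length p h) :
    IsMinPeriod w p :=
  ⟨H.isSlope.hasPeriod, fun _ hq => H.le_of_apply_add hq.1 fun _ => hq.prefixCount_add⟩

end PrefixCount

/-- The letter of the infinite word `w_{α,β}^ω` at position `i`, counted from `0`. -/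
def christoffelLetter (α β i : ℕ) : Bool := decide ((i + 1) * β / (α + β) ≠ i * β / (α + β))

section Christoffel

variable {α β : ℕ}

lemma christoffelLetter_periodic (hp : 0 < α + β) :
    Function.Periodic (christoffelLetter α β) (α + β) := by
  have div_add_period (k : ℕ) : (k + (α + β)) * β / (α + β) = k * β / (α + β) + β := by
    rw [add_mul, Nat.add_mul_div_left _ _ hp]
  intro i
  rw [christoffelLetter, christoffelLetter, add_right_comm, div_add_period, div_add_period]
  simp only [ne_eq, Nat.add_right_cancel_iff]

lemma floor_succ_eq_add_christoffelLetter (hp : 0 < α + β) (i : ℕ) :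
    ((i : ℤ) + 1) * β / ((α + β : ℕ) : ℤ) =
      (i : ℤ) * β / ((α + β : ℕ) : ℤ) + (christoffelLetter α β i).toInt := by
  have lower : i * β / (α + β) ≤ (i + 1) * β / (α + β) := Nat.div_le_div_right (by nlinarith)
  have upper : (i + 1) * β / (α + β) ≤ i * β / (α + β) + 1 := by
    rw [← Nat.add_div_right _ hp]
    exact Nat.div_le_div_right (by nlinarith)
  zify at lower upper
  by_cases h : (i + 1) * β / (α + β) = i * β / (α + β)
  · rw [christoffelLetter, decide_eq_false (not_not.2 h), Bool.toInt_false, add_zero]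
    exact_mod_cast h
  · rw [christoffelLetter, decide_eq_true h, Bool.toInt_true]
    zify at h
    push_cast
    omega

lemma wpow_map_range {f : ℕ → Bool} {p : ℕ} (hf : Function.Periodic f p) (m : ℕ) :
    wpow ((List.range p).map f) m = (List.range (m * p)).map f := by
  induction m with
  | zero => simp [wpow]
  | succ m ih =>
    have wpow_succ (w : List Bool) : wpow w (m + 1) = wpow w m ++ w := by
      simp [wpow, List.replicate_succ']
    rw [wpow_succ, ih, add_one_mul, List.range_add, List.map_append, List.map_map]
    congr 1
    refine List.map_congr_left fun i _ => ?_
    rw [Function.comp_apply, add_comm]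
    exact (hf.nat_mul m i).symm

lemma isOmegaFactor_map_range_iff {f : ℕ → Bool} {p : ℕ} (hp : 0 < p) (hf : Function.Periodic f p)
    {u : List Bool} :
    IsOmegaFactor u ((List.range p).map f) ↔ ∃ s, ∀ i < u.length, u.getD i false = f (s + i) := by
  simp only [IsOmegaFactor, wpow_map_range hf, List.infix_iff_getElem?, List.length_map,
    List.length_range]
  constructor
  · rintro ⟨m, s, hs, hu⟩
    refine ⟨s, fun i hi => ?_⟩
    have := hu i hi
    rw [List.getElem?_map, List.getElem?_range (by omega)] at this
    rw [List.getD_eq_getElem _ _ hi, add_comm s]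
    exact (Option.some.inj this).symm
  · rintro ⟨s, hu⟩
    have hle : u.length + s ≤ (u.length + s) * p := Nat.le_mul_of_pos_right _ hp
    refine ⟨u.length + s, s, hle, fun i hi => ?_⟩
    rw [List.getElem?_map, List.getElem?_range (by omega), Option.map_some, add_comm i, ← hu i hi,
      List.getD_eq_getElem _ _ hi]

lemma isOmegaFactor_lowerChristoffel_iff_floor (hp : 0 < α + β) {u : List Bool} :
    IsOmegaFactor u (lowerChristoffel α β) ↔ ∃ s : ℕ, ∀ i ≤ u.length,
      prefixCount u i =
        ((s : ℤ) + i) * β / ((α + β : ℕ) : ℤ) - (s : ℤ) * β / ((α + β : ℕ) : ℤ) := by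
  refine (isOmegaFactor_map_range_iff hp (christoffelLetter_periodic hp)).trans
    (exists_congr fun s => ⟨fun hu i => ?_, fun hu i hi => ?_⟩)
  · induction i with
    | zero => simp [prefixCount_zero]
    | succ i ih =>
      intro hi
      have hfloor := floor_succ_eq_add_christoffelLetter hp (s + i)
      push_cast at hfloor ih ⊢
      rw [prefixCount_succ hi, ih (by omega), hu i hi, ← add_assoc, hfloor]
      ring
  · have hfloor := floor_succ_eq_add_christoffelLetter hp (s + i)
    have hsucc := hu (i + 1) hi
    rw [prefixCount_succ hi, hu i hi.le] at hsucc
    push_cast at hfloor hsucc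
    rw [← add_assoc, hfloor] at hsucc
    exact eq_of_toInt_eq (by linarith)

lemma isOmegaFactor_lowerChristoffel_iff_isSlope (hp : 0 < α + β) {u : List Bool} :
    IsOmegaFactor u (lowerChristoffel α β) ↔ IsSlope (prefixCount u) u.length (α + β) β := by
  rw [isOmegaFactor_lowerChristoffel_iff_floor hp]
  constructor
  · rintro ⟨s, hs⟩
    exact isSlope_of_eq_floor hp hs
  · intro H
    obtain ⟨s, hs⟩ := H.exists_eq_floor
    refine ⟨s, fun i hi => ?_⟩
    rw [hs i hi, prefixCount_zero, zero_add]

end Christoffel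

/-- The factors of `w_{α,β}^ω` of minimal period `α + β` with Parikh vector `(a, b)`; the length
replaces the number of letters `0`, as in `NFactors` and `HFactors`. -/
def christoffelFactors (α β a b : ℕ) : Set (List Bool) :=
  {u | IsOmegaFactor u (lowerChristoffel α β) ∧ u.length = a + b ∧ IsMinPeriod u (α + β) ∧
    u.count true = b}

section Counting

variable {α β a b : ℕ}

lemma finite_christoffelFactors : (christoffelFactors α β a b).Finite :=
  (List.finite_length_eq Bool (a + b)).subset fun _ hu => hu.2.1

lemma isSlope_of_mem_christoffelFactors (hp : 0 < α + β) {u : List Bool}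
    (hu : u ∈ christoffelFactors α β a b) : IsSlope (prefixCount u) (a + b) (α + β) β := by
  rw [← hu.2.1]
  exact (isOmegaFactor_lowerChristoffel_iff_isSlope hp).1 hu.1

lemma balanced_of_mem_christoffelFactors (hp : 0 < α + β) {u : List Bool}
    (hu : u ∈ christoffelFactors α β a b) :
    BalancedWord u ∧ u.count false = a ∧ u.count true = b := by
  have hbalanced : BalancedWord u := by
    rw [balancedWord_iff, hu.2.1]
    exact (isSlope_of_mem_christoffelFactors hp hu).balancedUpTo
  have hlength := u.count_false_add_count_true
  obtain ⟨-, hu_length, -, hones⟩ := hu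
  exact ⟨hbalanced, by omega, hones⟩

lemma eq_of_mem_christoffelFactors {α' β' : ℕ} (hp : 0 < α + β) (hp' : 0 < α' + β') (hα : α ≤ a)
    (hβ : β ≤ b) {u : List Bool} (hu : u ∈ christoffelFactors α β a b)
    (hu' : u ∈ christoffelFactors α' β' a b) : α = α' ∧ β = β' := by
  have hperiod : α + β = α' + β' :=
    le_antisymm (hu.2.2.1.2 _ hu'.2.2.1.1) (hu'.2.2.1.2 _ hu.2.2.1.1)
  have ones := (isSlope_of_mem_christoffelFactors hp hu).apply_add (i := 0) (by omega)
  have ones' := (isSlope_of_mem_christoffelFactors hp' hu').apply_add (i := 0) (by omega)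
  rw [← hperiod, ones] at ones'
  omega

lemma exists_mem_christoffelFactors (ha : 0 < a) (hb : 0 < b) {w : List Bool}
    (hw : BalancedWord w) (hzeros : w.count false = a) (hones : w.count true = b) :
    ∃ α ∈ Finset.Icc 1 a, ∃ β ∈ Finset.Icc 1 b, w ∈ christoffelFactors α β a b := by
  have hlength : w.length = a + b := by rw [← w.count_false_add_count_true, hzeros, hones]
  obtain ⟨p, h, H⟩ := (balancedWord_iff.1 hw).exists_isMinSlope
  have hp := H.isSlope.pos
  have hpn : p ≤ a + b := hlength ▸ H.le_length (by omega)
  have htotal : prefixCount w (a + b) = b := by rw [← hlength, prefixCount_length, hones]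
  have hprefix : prefixCount w p = h := by
    simpa [prefixCount_zero] using H.isSlope.apply_add (i := 0) (by omega)
  have head : 0 ≤ h ∧ h ≤ p := by
    simpa [prefixCount_zero, hprefix] using prefixCount_add_sub_mem_Icc (w := w) 0 p
  have tail : 0 ≤ b - h ∧ b - h ≤ (a + b - p : ℕ) := by
    simpa only [Nat.add_sub_cancel' hpn, htotal, hprefix, Set.mem_Icc] using
      prefixCount_add_sub_mem_Icc (w := w) p (a + b - p)
  have strip : |p * b - h * (a + b)| < p := by
    simpa [prefixCount_zero, htotal] using
      H.isSlope.abs_mul_sub_lt (i := 0) (k := a + b) (by omega)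
  rw [abs_lt] at strip
  have h_ne_zero : h ≠ 0 := by
    rintro rfl
    nlinarith
  have h_ne_p : h ≠ p := by
    rintro rfl
    nlinarith
  obtain ⟨β, rfl⟩ := Int.eq_ofNat_of_zero_le head.1
  obtain ⟨α, rfl⟩ := Nat.exists_eq_add_of_le' (show β ≤ p by omega)
  exact ⟨α, Finset.mem_Icc.2 (by omega), β, Finset.mem_Icc.2 (by omega),
    (isOmegaFactor_lowerChristoffel_iff_isSlope hp).2 H.isSlope, hlength, H.isMinPeriod, hones⟩

lemma ncard_balanced_eq_sum (ha : 0 < a) (hb : 0 < b) :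
    {w : List Bool | BalancedWord w ∧ w.count false = a ∧ w.count true = b}.ncard =
      ∑ α ∈ Finset.Icc 1 a, ∑ β ∈ Finset.Icc 1 b, (christoffelFactors α β a b).ncard := by
  let factors (x : ℕ × ℕ) : Set (List Bool) := christoffelFactors x.1 x.2 a b
  let pairs : Finset (ℕ × ℕ) := Finset.Icc 1 a ×ˢ Finset.Icc 1 b
  have union_eq : {w : List Bool | BalancedWord w ∧ w.count false = a ∧ w.count true = b} =
      ⋃ x ∈ pairs, factors x := by
    ext w
    simp only [pairs, Set.mem_iUnion₂, Finset.mem_product]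
    constructor
    · rintro ⟨hw, hzeros, hones⟩
      obtain ⟨α, hα, β, hβ, hmem⟩ := exists_mem_christoffelFactors ha hb hw hzeros hones
      exact ⟨(α, β), ⟨hα, hβ⟩, hmem⟩
    · rintro ⟨x, ⟨hx, -⟩, hmem⟩
      exact balanced_of_mem_christoffelFactors (Nat.add_pos_left (Finset.mem_Icc.1 hx).1 _) hmem
  have disjoint : (pairs : Set (ℕ × ℕ)).PairwiseDisjoint factors := by
    rintro ⟨α, β⟩ hx ⟨α', β'⟩ hx' hne
    simp only [pairs, Finset.mem_coe, Finset.mem_product, Finset.mem_Icc] at hx hx'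
    refine Set.disjoint_left.2 fun w hw hw' => hne ?_
    obtain ⟨rfl, rfl⟩ := eq_of_mem_christoffelFactors (by omega) (by omega) hx.1.2 hx.2.2 hw hw'
    rfl
  rw [union_eq, ← Finset.sum_product', ← finsum_mem_coe_finset]
  exact (Finset.finite_toSet _).ncard_biUnion (fun _ _ => finite_christoffelFactors) disjoint

lemma abs_mul_count_sub_lt_of_isOmegaFactor (hp : 0 < α + β) {u : List Bool}
    (hu : IsOmegaFactor u (lowerChristoffel α β)) :
    |((α + β : ℕ) : ℤ) * u.count true - β * u.length| < (α + β : ℕ) := by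
  have H := (isOmegaFactor_lowerChristoffel_iff_isSlope hp).1 hu
  simpa [prefixCount_zero, prefixCount_length] using
    H.abs_mul_sub_lt (i := 0) (k := u.length) (by omega)

lemma count_eq_div_or_eq_div_add_one (hp : 0 < α + β) {u : List Bool}
    (hu : IsOmegaFactor u (lowerChristoffel α β)) :
    u.count true = u.length * β / (α + β) ∨ u.count true = u.length * β / (α + β) + 1 := by
  have hlt := abs_lt.1 (abs_mul_count_sub_lt_of_isOmegaFactor hp hu)
  have lower : u.length * β < (α + β) * (u.count true + 1) := by
    zify
    push_cast at hlt
    linarith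
  have upper : (α + β) * u.count true < (α + β) * (u.length * β / (α + β) + 2) := by
    have hdiv := Nat.lt_div_mul_add hp (a := u.length * β)
    zify at hdiv ⊢
    push_cast at hlt
    linarith
  have := Nat.div_lt_of_lt_mul lower
  have := Nat.lt_of_mul_lt_mul_left upper
  omega

lemma ncard_christoffelFactors_eq_zero (hp : 0 < α + β)
    (h : ((α + β : ℕ) : ℤ) ≤ |(α : ℤ) * b - β * a|) : (christoffelFactors α β a b).ncard = 0 := by
  rw [Set.ncard_eq_zero finite_christoffelFactors, Set.eq_empty_iff_forall_notMem]
  rintro u ⟨hu, hlength, -, hones⟩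
  have hlt := abs_mul_count_sub_lt_of_isOmegaFactor hp hu
  rw [hlength, hones] at hlt
  push_cast at hlt h
  refine h.not_gt (lt_of_eq_of_lt ?_ hlt)
  ring_nf

lemma ncard_christoffelFactors_eq_HFactors (hf : (a + b) * β / (α + β) + 1 = b) :
    (christoffelFactors α β a b).ncard = HFactors α β (a + b) := by
  simp only [christoffelFactors, HFactors, hf]

lemma ncard_christoffelFactors_eq_NFactors_sub_HFactors (hp : 0 < α + β)
    (hf : (a + b) * β / (α + β) = b) :
    (christoffelFactors α β a b).ncard = NFactors α β (a + b) - HFactors α β (a + b) := by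
  rw [NFactors, HFactors, ← Set.ncard_sdiff
    (fun _ hu => by exact ⟨hu.1, hu.2.1, hu.2.2.1⟩)
    ((List.finite_length_eq Bool (a + b)).subset fun _ hu => hu.2.1)]
  congr 1
  ext u
  constructor
  · rintro ⟨hu, hlength, hmin, hones⟩
    exact ⟨⟨hu, hlength, hmin⟩, fun heavy => by
      have := heavy.2.2.2
      omega⟩
  · rintro ⟨⟨hu, hlength, hmin⟩, not_heavy⟩
    have hcount := count_eq_div_or_eq_div_add_one hp hu
    rw [hlength] at hcount
    refine ⟨hu, hlength, hmin, ?_⟩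
    rcases hcount with light | heavy
    · rw [light, hf]
    · exact absurd ⟨hu, hlength, hmin, heavy⟩ not_heavy

lemma HFactors_eq_zero (hp : 0 < α + β) {n : ℕ} (hdvd : α + β ∣ n * β) : HFactors α β n = 0 := by
  obtain ⟨c, hc⟩ := hdvd
  rw [HFactors, hc, Nat.mul_div_cancel_left c hp]
  convert Set.ncard_empty (List Bool)
  rw [Set.eq_empty_iff_forall_notMem]
  rintro u ⟨hu, hlength, -, heavy⟩
  have hlt := abs_mul_count_sub_lt_of_isOmegaFactor hp hu
  zify at hc
  rw [hlength, heavy, mul_comm (β : ℤ), hc] at hlt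
  push_cast at hlt
  linarith [(abs_lt.1 hlt).2]

lemma ncard_christoffelFactors (hp : 0 < α + β) :
    (christoffelFactors α β a b).ncard =
      (if β * a ≤ α * b ∧ α * b < β * a + (α + β) then HFactors α β (a + b) else 0) +
      (if α * b ≤ β * a ∧ β * a < α * b + (β + α) then
        NFactors α β (a + b) - HFactors α β (a + b) else 0) := by
  have hdiv {c : ℕ} (lower : c * (α + β) ≤ (a + b) * β) (upper : (a + b) * β < (c + 1) * (α + β)) :
      (a + b) * β / (α + β) = c :=
    Nat.div_eq_of_lt_le lower upper
  by_cases hfar : β * a + (α + β) ≤ α * b ∨ α * b + (α + β) ≤ β * a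
  · rw [if_neg (by omega), if_neg (by omega)]
    refine ncard_christoffelFactors_eq_zero hp (le_abs.2 ?_)
    zify at hfar
    push_cast
    rcases hfar with h | h
    · left; linarith
    · right; linarith
  push Not at hfar
  rcases lt_trichotomy (β * a) (α * b) with hlt | heq | hgt
  · rw [if_pos (by omega), if_neg (by omega), add_zero]
    apply ncard_christoffelFactors_eq_HFactors
    obtain ⟨c, rfl⟩ : ∃ c, b = c + 1 := ⟨b - 1, by
      have := Nat.pos_of_mul_pos_left (Nat.zero_lt_of_lt hlt)
      omega⟩
    rw [hdiv (c := c) (by linarith) (by linarith)]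
  · have no_heavy : HFactors α β (a + b) = 0 := HFactors_eq_zero hp ⟨b, by linarith⟩
    have hfloor : (a + b) * β / (α + β) = b := hdiv (by linarith) (by linarith)
    rw [if_pos (by omega), if_pos (by omega),
      ncard_christoffelFactors_eq_NFactors_sub_HFactors hp hfloor, no_heavy, zero_add]
  · rw [if_neg (by omega), if_pos (by omega), zero_add]
    exact ncard_christoffelFactors_eq_NFactors_sub_HFactors hp (hdiv (by linarith) (by linarith))

lemma mul_div_lt_and_le_mul_div_iff (ha : 0 < a) :
    ((α : ℚ) * ((b : ℚ) - 1) / ((a : ℚ) + 1) < (β : ℚ) ∧ (β : ℚ) ≤ (α : ℚ) * (b : ℚ) / (a : ℚ)) ↔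
      β * a ≤ α * b ∧ α * b < β * a + (α + β) := by
  have ha' : (0 : ℚ) < a := by exact_mod_cast ha
  rw [div_lt_iff₀ (by positivity), le_div_iff₀ ha', and_comm, ← Nat.cast_le (α := ℚ),
    ← Nat.cast_lt (α := ℚ)]
  push_cast
  constructor <;> rintro ⟨h, h'⟩ <;> constructor <;> linarith

end Counting

lemma setOf_balanced_eq_singleton_replicate (x : Bool) (n : ℕ) :
    {w : List Bool | BalancedWord w ∧ w.count (!x) = 0 ∧ w.count x = n} = {List.replicate n x} := by
  ext w
  constructor
  · rintro ⟨-, hnot, hcount⟩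
    have hx_length : w.count x = w.length := by
      have := w.count_not_add_count x
      omega
    have hx := List.count_eq_length.1 hx_length
    exact List.eq_replicate_iff.2 ⟨by rw [← hcount, hx_length], fun y hy => (hx y hy).symm⟩
  · rintro rfl
    refine ⟨fun u v hu hv huv => ?_, by simp [List.count_replicate], by simp⟩
    have huv_eq : u = v := by
      rw [(List.infix_replicate_iff.1 hu).2, (List.infix_replicate_iff.1 hv).2, huv]
    rw [huv_eq, sub_self, abs_zero]
    exact zero_le_one

/-- Closed formula for the number of balanced binary words with Parikh
vector `(a, b)`. -/
theorem stmt12 (a b : ℕ) :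
    (0 < a → 0 < b →
      Set.ncard {w : List Bool | BalancedWord w ∧ w.count false = a ∧ w.count true = b} =
        (∑ α ∈ Finset.Icc 1 a, ∑ β ∈ (Finset.Icc 1 b).filter
            (fun β : ℕ => (α : ℚ) * ((b : ℚ) - 1) / ((a : ℚ) + 1) < (β : ℚ) ∧
              (β : ℚ) ≤ (α : ℚ) * (b : ℚ) / (a : ℚ)),
          HFactors α β (a + b)) +
        (∑ β ∈ Finset.Icc 1 b, ∑ α ∈ (Finset.Icc 1 a).filter
            (fun α : ℕ => (β : ℚ) * ((a : ℚ) - 1) / ((b : ℚ) + 1) < (α : ℚ) ∧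
              (α : ℚ) ≤ (β : ℚ) * (a : ℚ) / (b : ℚ)),
          (NFactors α β (a + b) - HFactors α β (a + b)))) ∧
    ((a = 0 ∧ 0 < b) ∨ (0 < a ∧ b = 0) →
      Set.ncard {w : List Bool | BalancedWord w ∧ w.count false = a ∧ w.count true = b}
        = 1) := by
  refine ⟨fun ha hb => ?_, ?_⟩
  · simp only [mul_div_lt_and_le_mul_div_iff ha, mul_div_lt_and_le_mul_div_iff hb,
      Finset.sum_filter]
    rw [ncard_balanced_eq_sum ha hb, Finset.sum_comm (s := Finset.Icc 1 b),
      ← Finset.sum_add_distrib]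
    refine Finset.sum_congr rfl fun α hα => ?_
    rw [← Finset.sum_add_distrib]
    refine Finset.sum_congr rfl fun β _ => ?_
    exact ncard_christoffelFactors (Nat.add_pos_left (Finset.mem_Icc.1 hα).1 β)
  · rintro (⟨rfl, -⟩ | ⟨-, rfl⟩)
    · exact Set.ncard_eq_one.2 ⟨_, setOf_balanced_eq_singleton_replicate true b⟩
    · simp_rw [and_comm (a := List.count false _ = a)]
      exact Set.ncard_eq_one.2 ⟨_, setOf_balanced_eq_singleton_replicate false a⟩
end

section
/- A binary word z is a minimal forbidden word for the language of balanced binary words (i.e., z is not balanced but every proper factor of z is balanced) if and only if there exist letters x, y with {x,y} = {0,1}, a binary word v, an integer m ≥ 2, and a primitive Christoffel word c such that z = y·v·x and x·v·y = c^m. -/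
/-!
Write `f i` for the number of ones among the first `i` letters of `w = 0v1`, of length `n`. That the
two longest proper factors of `1v0` are balanced means that `f` is superadditive up to `n` and
cyclically past `n`, with balanced interior `v`. Given this, `1v0` is unbalanced exactly when `n`
splits as `p + q` with `p, q > 0` and `f n = f p + f q`. Such a split makes `p` and `q`, hence `n`,
periods of the increments of `f`, and a superadditive `f`, additive up to one, whose increments have
period `n` is `f i = ⌊i N / n⌋` with `N = f n`: the counting function of a Christoffel word with `N`
ones. For this `f` a split exists if and only if `gcd (n, N) > 1`, that is, if and only if `w` is a
proper power of a primitive Christoffel word. Exchanging the two letters treats `z = 0v1`.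
-/

section Superadditive

variable {f : ℕ → ℕ}

theorem mul_le_of_superadditive (super : ∀ i j, f i + f j ≤ f (i + j)) (k i : ℕ) :
    k * f i ≤ f (k * i) := by
  induction k with
  | zero => simp
  | succ k ih =>
    have := super (k * i) i
    rw [← add_one_mul] at this
    linarith

theorem succ_mul_le_of_le_add_add_one (sub : ∀ i j, f (i + j) ≤ f i + f j + 1) (k i : ℕ) :
    f ((k + 1) * i) ≤ (k + 1) * f i + k := by
  induction k with
  | zero => simp
  | succ k ih =>
    have := sub ((k + 1) * i) i
    rw [← add_one_mul] at this
    linarith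

theorem map_mul_of_add_period {p : ℕ} (hf : f 0 = 0) (per : ∀ i, f (i + p) = f i + f p) (k : ℕ) :
    f (k * p) = k * f p := by
  induction k with
  | zero => simpa using hf
  | succ k ih => rw [add_one_mul, per, ih, add_one_mul]

-- `f (p * i) = i * f p` lies between `p * f i` and `p * f i + (p - 1)`.
theorem eq_mul_div_of_superadditive {p : ℕ} (hp : 0 < p) (super : ∀ i j, f i + f j ≤ f (i + j))
    (sub : ∀ i j, f (i + j) ≤ f i + f j + 1) (mul : ∀ k, f (k * p) = k * f p) (i : ℕ) :
    f i = i * f p / p := by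
  obtain ⟨k, rfl⟩ := Nat.exists_eq_add_one_of_ne_zero hp.ne'
  have lower := mul_le_of_superadditive super (k + 1) i
  have upper := succ_mul_le_of_le_add_add_one sub k i
  rw [mul_comm (k + 1) i, mul] at lower upper
  symm
  rw [Nat.div_eq_iff hp, mul_comm (f i)]
  omega

end Superadditive

/-- The function agreeing with `f` on `[0, p)` that grows by `f p` over every `p` steps. -/
def periodicExtension (f : ℕ → ℕ) (p i : ℕ) : ℕ :=
  f (i % p) + i / p * f p

namespace periodicExtension

variable {f : ℕ → ℕ} {p : ℕ}

theorem add_mul_period (hp : 0 < p) (i k : ℕ) :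
    periodicExtension f p (i + k * p) = periodicExtension f p i + k * f p := by
  simp only [periodicExtension, Nat.add_mul_mod_self_right, Nat.add_mul_div_right _ _ hp, add_mul,
    add_assoc]

theorem of_lt {i : ℕ} (hi : i < p) : periodicExtension f p i = f i := by
  simp [periodicExtension, Nat.mod_eq_of_lt hi, Nat.div_eq_of_lt hi]

theorem mod_add_mod (hp : 0 < p) (i j : ℕ) :
    periodicExtension f p (i + j) =
      periodicExtension f p (i % p + j % p) + (i / p + j / p) * f p := by
  rw [← add_mul_period hp]
  congr 1
  linarith [Nat.mod_add_div' i p, Nat.mod_add_div' j p]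

theorem eq_of_lt {n : ℕ} (hp : 0 < p) (per : ∀ j, j + p < n → f (j + p) = f j + f p)
    {i : ℕ} (hi : i < n) : periodicExtension f p i = f i := by
  induction i using Nat.strong_induction_on with
  | _ i ih =>
    rcases lt_or_ge i p with hip | hpi
    · exact of_lt hip
    · obtain ⟨j, rfl⟩ := Nat.exists_eq_add_of_le' hpi
      have := add_mul_period (f := f) hp j 1
      rw [one_mul, one_mul, ih j (by omega) (by omega), ← per j hi] at this
      exact this

theorem superadditive (hp : 0 < p)
    (super : ∀ i j, i < p → j < p → f i + f j ≤ periodicExtension f p (i + j)) (i j : ℕ) :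
    periodicExtension f p i + periodicExtension f p j ≤ periodicExtension f p (i + j) := by
  have := super _ _ (Nat.mod_lt i hp) (Nat.mod_lt j hp)
  rw [mod_add_mod hp]
  simp only [periodicExtension, add_mul] at this ⊢
  omega

theorem le_add_add_one (hp : 0 < p)
    (sub : ∀ i j, i < p → j < p → periodicExtension f p (i + j) ≤ f i + f j + 1) (i j : ℕ) :
    periodicExtension f p (i + j) ≤ periodicExtension f p i + periodicExtension f p j + 1 := by
  have := sub _ _ (Nat.mod_lt i hp) (Nat.mod_lt j hp)
  rw [mod_add_mod hp]
  simp only [periodicExtension, add_mul] at this ⊢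
  omega

theorem add_period {q : ℕ} (hp : 0 < p)
    (per : ∀ i, i < p → periodicExtension f p (i + q) = f i + periodicExtension f p q) (i : ℕ) :
    periodicExtension f p (i + q) = periodicExtension f p i + periodicExtension f p q := by
  have h := per _ (Nat.mod_lt i hp)
  have hq := add_mul_period (f := f) hp (i % p + q) (i / p)
  rw [add_right_comm, Nat.mod_add_div', h] at hq
  rw [hq, add_right_comm]
  rfl

end periodicExtension

section Floor

variable {n N : ℕ}

theorem mul_div_add_mul_div_le (i j : ℕ) : i * N / n + j * N / n ≤ (i + j) * N / n := by
  rw [add_mul]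
  exact Nat.div_add_div_le_add_div

theorem add_mul_div_le_add_add_one (hn : 0 < n) (i j : ℕ) :
    (i + j) * N / n ≤ i * N / n + j * N / n + 1 := by
  rw [add_mul, Nat.add_div hn]
  split_ifs <;> omega

theorem succ_mul_div_eq_or_eq_add_one (hn : 0 < n) (hN : N ≤ n) (i : ℕ) :
    (i + 1) * N / n = i * N / n ∨ (i + 1) * N / n = i * N / n + 1 := by
  have lower := Nat.div_le_div_right (c := n) (Nat.mul_le_mul_right N (Nat.le_add_right i 1))
  have upper := Nat.div_le_div_right (c := n) (Nat.add_le_add_left hN (i * N))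
  rw [Nat.add_div_right _ hn, ← add_one_mul] at upper
  omega

theorem exists_le_mul_div_add_mul_div_iff (hn : 0 < n) :
    (∃ p q, 0 < p ∧ 0 < q ∧ p + q = n ∧ N ≤ p * N / n + q * N / n) ↔ 1 < n.gcd N := by
  constructor
  · rintro ⟨p, q, hp, hq, hpq, h⟩
    by_contra! hgcd
    have coprime : n.Coprime N := le_antisymm hgcd (Nat.gcd_pos_of_pos_left N hn)
    have hdvd : n ∣ p * N := by
      have h₁ := Nat.mul_div_le (p * N) n
      have h₂ := Nat.mul_div_le (q * N) n
      have h₃ := Nat.mul_le_mul_left n h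
      have h₄ : n * N = p * N + q * N := by rw [← hpq, add_mul]
      exact ⟨p * N / n, by linarith⟩
    have := Nat.le_of_dvd hp (coprime.dvd_of_dvd_mul_right hdvd)
    omega
  · intro hgcd
    obtain ⟨a, hn'⟩ := Nat.gcd_dvd_left n N
    obtain ⟨b, hN⟩ := Nat.gcd_dvd_right n N
    obtain ⟨k, hk⟩ := Nat.exists_eq_add_of_le' hgcd
    rw [hk] at hn' hN
    have ha : 0 < a := Nat.pos_of_mul_pos_left (hn' ▸ hn)
    have hp : a * N / n = b := Nat.div_eq_of_eq_mul_left hn (by rw [hN, hn']; ring)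
    have hq : (k + 1) * a * N / n = (k + 1) * b :=
      Nat.div_eq_of_eq_mul_left hn (by rw [hN, hn']; ring)
    refine ⟨a, (k + 1) * a, ha, by positivity, by linarith, ?_⟩
    rw [hp, hq]
    linarith

end Floor

/-- The increments of `f` over any two subintervals of `[a, b]` of equal length differ by at most
one. For `f` the prefix counts of a word `w`, this is the balance of the factor of `w` between
positions `a` and `b`. The inequality is written with both sides moved so that no subtraction
occurs; the reverse one is its instance with the two intervals exchanged. -/
def BalancedOn (f : ℕ → ℕ) (a b : ℕ) : Prop :=
  ∀ i i' j j', a ≤ i → i ≤ i' → i' ≤ b → a ≤ j → j' ≤ b → i' + j = j' + i →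
    f i' + f j ≤ f j' + f i + 1

theorem BalancedOn.mono {f : ℕ → ℕ} {a b c d : ℕ} (h : BalancedOn f a b) (hac : a ≤ c)
    (hdb : d ≤ b) : BalancedOn f c d :=
  fun i i' j j' hi hii' hi' hj hj' =>
    h i i' j j' (hac.trans hi) hii' (hi'.trans hdb) (hac.trans hj) (hj'.trans hdb)

theorem balancedOn_iff_prefix_suffix {f : ℕ → ℕ} {n : ℕ} (left : BalancedOn f 0 (n - 1))
    (right : BalancedOn f 1 n) :
    BalancedOn f 0 n ↔ ∀ p q, p + q = n →
      f p + f q ≤ f n + f 0 + 1 ∧ f n + f 0 ≤ f p + f q + 1 := by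
  constructor
  · intro h p q hpq
    have := h 0 p q n
    have := h q n 0 p
    omega
  · intro h i i' j j' hi hii' hi' hj hj' hij
    by_cases avoids_start : 1 ≤ i ∧ 1 ≤ j
    · exact right i i' j j' avoids_start.1 hii' hi' avoids_start.2 hj' hij
    by_cases avoids_end : i' ≤ n - 1 ∧ j' ≤ n - 1
    · exact left i i' j j' hi hii' avoids_end.1 hj avoids_end.2 hij
    obtain ⟨rfl, rfl⟩ | ⟨rfl, rfl⟩ | ⟨rfl, rfl⟩ :
        i = 0 ∧ n = j' ∨ j = 0 ∧ n = i' ∨ i = j ∧ i' = j' := by omega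
    · exact (h i' j hij).1
    · exact (h j' i hij.symm).2.trans (by omega)
    · omega

theorem BalancedOn.of_map_one_add_map_pred {f : ℕ → ℕ} {n : ℕ} (left : BalancedOn f 0 (n - 1))
    (right : BalancedOn f 1 n) (of_ends : f 1 + f (n - 1) = f n + f 0) : BalancedOn f 0 n := by
  refine (balancedOn_iff_prefix_suffix left right).2 fun p q hpq => ?_
  rcases p.eq_zero_or_pos with rfl | hp
  · obtain rfl : q = n := by omega
    omega
  rcases q.eq_zero_or_pos with rfl | hq
  · obtain rfl : p = n := by omega
    omega
  have := left 1 p q (n - 1)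
  have := left q (n - 1) 1 p
  omega

/-- The conditions that balance of `1v` and of `v0` imposes on the prefix counts `f` of the word
`0v1` of length `n`: superadditivity, also for sums that wrap around past `n`, and balance of the
interior `v`. -/
structure NearlyAdditive (f : ℕ → ℕ) (n : ℕ) : Prop where
  add_le : ∀ i j, i + j < n → f i + f j ≤ f (i + j)
  add_le_wrap : ∀ i j k, i < n → j < n → i + j = n + k → f i + f j ≤ f n + f k
  balancedOn : BalancedOn f 1 (n - 1)

namespace NearlyAdditive

variable {f : ℕ → ℕ} {n p q : ℕ}

theorem map_zero (hf : NearlyAdditive f n) (hn : 0 < n) : f 0 = 0 := by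
  simpa using hf.add_le 0 0 hn

theorem map_add_of_split (hf : NearlyAdditive f n) (hp : 0 < p) (hpq : p + q = n)
    (hsplit : f n ≤ f p + f q) {j : ℕ} (hj : j + p < n) : f (j + p) = f j + f p := by
  have := hf.add_le j p hj
  have := hf.add_le_wrap (j + p) q j hj (by omega) (by omega)
  omega

theorem le_add_add_one_of_split (hf : NearlyAdditive f n) (hle : p ≤ q) (hpq : p + q = n)
    (hsplit : f n ≤ f p + f q) {i j : ℕ} (hi : i < p) (hj : j < p) :
    f (i + j) ≤ f i + f j + 1 := by
  rcases j.eq_zero_or_pos with rfl | hj₀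
  · rw [add_zero]
    omega
  · have := hf.map_add_of_split (by omega) hpq hsplit (j := i) (by omega)
    have := hf.balancedOn j (i + j) p (i + p)
    omega

theorem periodicExtension_eq (hf : NearlyAdditive f n) (hp : 0 < p) (hpq : p + q = n)
    (hsplit : f n ≤ f p + f q) {i : ℕ} (hi : i < n) : periodicExtension f p i = f i :=
  periodicExtension.eq_of_lt hp (fun _ => hf.map_add_of_split hp hpq hsplit) hi

theorem periodicExtension_superadditive (hf : NearlyAdditive f n) (hp : 0 < p) (hle : p ≤ q)
    (hpq : p + q = n) (hsplit : f n ≤ f p + f q) (i j : ℕ) :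
    periodicExtension f p i + periodicExtension f p j ≤ periodicExtension f p (i + j) := by
  refine periodicExtension.superadditive hp (fun i j hi hj => ?_) i j
  rw [hf.periodicExtension_eq hp hpq hsplit (by omega)]
  exact hf.add_le i j (by omega)

theorem periodicExtension_le_add_add_one (hf : NearlyAdditive f n) (hp : 0 < p) (hle : p ≤ q)
    (hpq : p + q = n) (hsplit : f n ≤ f p + f q) (i j : ℕ) :
    periodicExtension f p (i + j) ≤ periodicExtension f p i + periodicExtension f p j + 1 := by
  refine periodicExtension.le_add_add_one hp (fun i j hi hj => ?_) i j
  rw [hf.periodicExtension_eq hp hpq hsplit (by omega)]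
  exact hf.le_add_add_one_of_split hle hpq hsplit hi hj

-- The split makes `q`, hence also `n = q + p`, a period of the increments of `f`.
theorem periodicExtension_add_length (hf : NearlyAdditive f n) (hp : 0 < p) (hle : p ≤ q)
    (hpq : p + q = n) (hsplit : f n ≤ f p + f q) (i : ℕ) :
    periodicExtension f p (i + n) = periodicExtension f p i + f n := by
  have eq_of_lt {i : ℕ} : i < n → periodicExtension f p i = f i :=
    hf.periodicExtension_eq hp hpq hsplit
  have add_q := periodicExtension.add_period (f := f) (q := q) hp (fun j hj => by
    rw [eq_of_lt (by omega), eq_of_lt (by omega)]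
    exact hf.map_add_of_split (q := p) (by omega) (by omega) (by omega) (by omega)) i
  have add_p := periodicExtension.add_mul_period (f := f) hp (i + q) 1
  have f_n : f n = f p + f q := by
    have := hf.add_le_wrap p q 0 (by omega) (by omega) hpq
    have := hf.map_zero (by omega)
    omega
  rw [one_mul, one_mul, add_q, eq_of_lt (show q < n by omega), add_assoc i, add_comm q,
    hpq] at add_p
  omega

theorem eq_mul_div_of_split (hf : NearlyAdditive f n) (hp : 0 < p) (hle : p ≤ q)
    (hpq : p + q = n) (hsplit : f n ≤ f p + f q) {i : ℕ} (hi : i ≤ n) : f i = i * f n / n := by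
  have hn : 0 < n := by omega
  have F_zero : periodicExtension f p 0 = 0 := by
    rw [hf.periodicExtension_eq hp hpq hsplit hn, hf.map_zero hn]
  have F_add := hf.periodicExtension_add_length hp hle hpq hsplit
  have F_n : periodicExtension f p n = f n := by simpa [F_zero] using F_add 0
  rcases hi.eq_or_lt with rfl | hi
  · exact (Nat.mul_div_cancel_left _ hn).symm
  · rw [← hf.periodicExtension_eq hp hpq hsplit hi, ← F_n]
    exact eq_mul_div_of_superadditive hn
      (hf.periodicExtension_superadditive hp hle hpq hsplit)
      (hf.periodicExtension_le_add_add_one hp hle hpq hsplit)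
      (map_mul_of_add_period F_zero fun j => by rw [F_add, F_n]) i

end NearlyAdditive

theorem nearlyAdditive_mul_div {n : ℕ} (hn : 0 < n) (N : ℕ) :
    NearlyAdditive (fun i => i * N / n) n where
  add_le i j _ := mul_div_add_mul_div_le i j
  add_le_wrap i j k _ _ hij := by
    have := mul_div_add_mul_div_le (n := n) (N := N) i j
    rw [hij, add_mul, Nat.add_div_of_dvd_right (Dvd.intro N rfl)] at this
    exact this
  balancedOn i i' j j' _ _ _ _ _ hij := by
    have lower := mul_div_add_mul_div_le (n := n) (N := N) i' j
    rw [hij] at lower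
    exact lower.trans (add_mul_div_le_add_add_one hn j' i)

theorem NearlyAdditive.congr {f g : ℕ → ℕ} {n : ℕ} (hf : NearlyAdditive f n)
    (hfg : ∀ i ≤ n, f i = g i) : NearlyAdditive g n where
  add_le i j hij := by
    rw [← hfg i (by omega), ← hfg j (by omega), ← hfg _ hij.le]
    exact hf.add_le i j hij
  add_le_wrap i j k hi hj hij := by
    rw [← hfg i hi.le, ← hfg j hj.le, ← hfg n le_rfl, ← hfg k (by omega)]
    exact hf.add_le_wrap i j k hi hj hij
  balancedOn i i' j j' hi hii' hi' hj hj' hij := by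
    rw [← hfg i (by omega), ← hfg i' (by omega), ← hfg j (by omega), ← hfg j' (by omega)]
    exact hf.balancedOn i i' j j' hi hii' hi' hj hj' hij

theorem nearlyAdditive_and_split_iff {f : ℕ → ℕ} {n : ℕ} (hn : 0 < n) :
    (NearlyAdditive f n ∧ ∃ p q, 0 < p ∧ 0 < q ∧ p + q = n ∧ f n ≤ f p + f q) ↔
      (∀ i ≤ n, f i = i * f n / n) ∧ 1 < n.gcd (f n) := by
  have gcd_iff (h : ∀ i ≤ n, f i = i * f n / n) :
      (∃ p q, 0 < p ∧ 0 < q ∧ p + q = n ∧ f n ≤ f p + f q) ↔ 1 < n.gcd (f n) := by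
    rw [← exists_le_mul_div_add_mul_div_iff hn]
    refine exists₂_congr fun p q => and_congr_right fun _ => and_congr_right fun _ =>
      and_congr_right fun hpq => ?_
    rw [← h p (by omega), ← h q (by omega)]
  constructor
  · rintro ⟨hf, p, q, hp, hq, hpq, hsplit⟩
    have h : ∀ i ≤ n, f i = i * f n / n := fun i hi => by
      rcases le_total p q with hle | hle
      · exact hf.eq_mul_div_of_split hp hle hpq hsplit hi
      · exact hf.eq_mul_div_of_split hq hle (by omega) (by omega) hi
    exact ⟨h, (gcd_iff h).1 ⟨p, q, hp, hq, hpq, hsplit⟩⟩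
  · rintro ⟨h, hgcd⟩
    exact ⟨(nearlyAdditive_mul_div hn (f n)).congr fun i hi => (h i hi).symm, (gcd_iff h).2 hgcd⟩

/-- The number of ones among the first `i` letters of `w`. -/
def ones (w : List Bool) (i : ℕ) : ℕ :=
  (w.take i).count true

@[simp]
theorem ones_zero (w : List Bool) : ones w 0 = 0 := rfl

theorem ones_succ {w : List Bool} {i : ℕ} (hi : i < w.length) :
    ones w (i + 1) = ones w i + w[i].toNat := by
  rw [ones, List.take_succ_eq_append_getElem hi, List.count_append, ← ones]
  cases w[i] <;> rfl

theorem ones_mono (w : List Bool) : Monotone (ones w) := fun _ _ hij =>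
  (List.take_sublist_take_left hij).count_le true

theorem ones_succ_le (w : List Bool) (i : ℕ) : ones w (i + 1) ≤ ones w i + 1 := by
  rcases lt_or_ge i w.length with hi | hi
  · rw [ones_succ hi]
    exact Nat.add_le_add_left (Bool.toNat_le _) _
  · rw [ones, ones, List.take_of_length_le hi, List.take_of_length_le (hi.trans i.le_succ)]
    exact Nat.le_succ _

theorem eq_of_ones_eq {w w' : List Bool} (hlen : w.length = w'.length)
    (h : ∀ i ≤ w.length, ones w i = ones w' i) : w = w' := by
  refine List.ext_getElem hlen fun i hi hi' => ?_
  have hsucc := h (i + 1) hi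
  rw [ones_succ hi, ones_succ hi', h i hi.le] at hsucc
  cases hwi : w[i] <;> cases hwi' : w'[i] <;> simp_all

theorem ones_cons_concat_of_le (y x : Bool) {v : List Bool} {i : ℕ} (hi : i ≤ v.length) :
    ones (y :: v ++ [x]) (i + 1) = y.toNat + ones v i := by
  rw [ones, List.cons_append, List.take_succ_cons, List.take_append_of_le_length hi,
    List.count_cons, ← ones, add_comm]
  cases y <;> rfl

theorem ones_cons_concat_length (y x : Bool) (v : List Bool) :
    ones (y :: v ++ [x]) (v.length + 2) = y.toNat + ones v v.length + x.toNat := by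
  rw [ones_succ (by simp), ones_cons_concat_of_le y x le_rfl,
    List.getElem_concat_length (by simp)]

theorem ones_drop_take (w : List Bool) (i l : ℕ) :
    ones w i + ((w.drop i).take l).count true = ones w (i + l) := by
  rw [ones, ones, List.take_add, List.count_append]

theorem infix_iff_exists_eq_take_drop {α : Type*} {u w : List α} :
    u <:+: w ↔ ∃ i l, i + l ≤ w.length ∧ u = (w.drop i).take l := by
  constructor
  · rintro ⟨p, s, rfl⟩
    exact ⟨p.length, u.length, by simp, by simp⟩
  · rintro ⟨i, l, -, rfl⟩
    exact (List.take_prefix _ _).isInfix.trans (List.drop_suffix _ _).isInfix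

theorem balancedWord_iff_balancedOn_ones {w : List Bool} :
    BalancedWord w ↔ BalancedOn (ones w) 0 w.length := by
  constructor
  · intro h i i' j j' _ hii' hi' _ hj' hij
    have balance := h ((w.drop i).take (i' - i)) ((w.drop j).take (i' - i))
      (infix_iff_exists_eq_take_drop.2 ⟨i, _, by omega, rfl⟩)
      (infix_iff_exists_eq_take_drop.2 ⟨j, _, by omega, rfl⟩) (by simp; omega)
    have hi := ones_drop_take w i (i' - i)
    have hj := ones_drop_take w j (i' - i)
    rw [show i + (i' - i) = i' by omega] at hi
    rw [show j + (i' - i) = j' by omega] at hj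
    rw [abs_le] at balance
    omega
  · intro h u v hu hv huv
    obtain ⟨i, l, hi, rfl⟩ := infix_iff_exists_eq_take_drop.1 hu
    obtain ⟨j, l', hj, rfl⟩ := infix_iff_exists_eq_take_drop.1 hv
    obtain rfl : l = l' := by
      simp only [List.length_take, List.length_drop] at huv
      omega
    have hi' := ones_drop_take w i l
    have hj' := ones_drop_take w j l
    have := h i (i + l) j (j + l)
    have := h j (j + l) i (i + l)
    rw [abs_le]
    omega

theorem balancedWord_take_drop_iff {w : List Bool} {i l : ℕ} (hl : i + l ≤ w.length) :
    BalancedWord ((w.drop i).take l) ↔ BalancedOn (ones w) i (i + l) := by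
  have shift : ∀ k ≤ l, ones w i + ones ((w.drop i).take l) k = ones w (i + k) := fun k hk => by
    rw [← ones_drop_take w i k, Nat.add_left_cancel_iff, ones, List.take_take, min_eq_left hk]
  have length_eq : ((w.drop i).take l).length = l := by
    simp only [List.length_take, List.length_drop]
    omega
  rw [balancedWord_iff_balancedOn_ones, length_eq]
  constructor
  · intro h a a' b b' ha haa' ha' hb hb' hab
    obtain ⟨a, rfl⟩ := Nat.exists_eq_add_of_le ha
    obtain ⟨a', rfl⟩ := Nat.exists_eq_add_of_le (ha.trans haa')
    obtain ⟨b, rfl⟩ := Nat.exists_eq_add_of_le hb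
    obtain ⟨b', rfl⟩ := Nat.exists_eq_add_of_le (show i ≤ b' by omega)
    have := h a a' b b'
    have := shift a
    have := shift a'
    have := shift b
    have := shift b'
    omega
  · intro h a a' b b' _ _ _ _ _ _
    have := h (i + a) (i + a') (i + b) (i + b')
    have := shift a
    have := shift a'
    have := shift b
    have := shift b'
    omega

/-- Minimal forbidden words for the language of balanced words: the unbalanced words all of whose
proper factors are balanced. -/
def IsMinimalForbidden (z : List Bool) : Prop :=
  ¬ BalancedWord z ∧ ∀ u, u <:+: z → u ≠ z → BalancedWord u

theorem isMinimalForbidden_iff_balancedOn_ones {z : List Bool} :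
    IsMinimalForbidden z ↔ ¬ BalancedOn (ones z) 0 z.length ∧
      BalancedOn (ones z) 0 (z.length - 1) ∧ BalancedOn (ones z) 1 z.length := by
  rw [IsMinimalForbidden, balancedWord_iff_balancedOn_ones]
  refine and_congr_right fun hz => ?_
  have length_pos : 0 < z.length := by
    by_contra! hlen
    refine hz fun i i' j j' _ _ _ _ _ _ => ?_
    obtain ⟨rfl, rfl⟩ : i = i' ∧ j = j' := by omega
    omega
  constructor
  · intro h
    have proper_factor : ∀ i l, i + l ≤ z.length → l < z.length →
        BalancedOn (ones z) i (i + l) := fun i l hl hlt => by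
      refine (balancedWord_take_drop_iff hl).1
        (h _ (infix_iff_exists_eq_take_drop.2 ⟨i, l, hl, rfl⟩) fun heq => ?_)
      have := congrArg List.length heq
      simp only [List.length_take, List.length_drop] at this
      omega
    have left := proper_factor 0 (z.length - 1) (by omega) (by omega)
    have right := proper_factor 1 (z.length - 1) (by omega) (by omega)
    rw [zero_add] at left
    rw [Nat.add_sub_cancel' length_pos] at right
    exact ⟨left, right⟩
  · rintro ⟨left, right⟩ u hu hne
    obtain ⟨i, l, hl, rfl⟩ := infix_iff_exists_eq_take_drop.1 hu
    rw [balancedWord_take_drop_iff hl]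
    rcases i.eq_zero_or_pos with rfl | hi
    · have : l ≠ z.length := by
        rintro rfl
        simp at hne
      exact left.mono le_rfl (by omega)
    · exact right.mono hi hl

theorem IsMinimalForbidden.exists_eq_cons_concat {z : List Bool} (hz : IsMinimalForbidden z) :
    ∃ y v x, x ≠ y ∧ z = y :: v ++ [x] := by
  obtain ⟨unbalanced, left, right⟩ := isMinimalForbidden_iff_balancedOn_ones.1 hz
  have ends_ne := mt (left.of_map_one_add_map_pred right) unbalanced
  obtain rfl | ⟨w, x, rfl⟩ := z.eq_nil_or_concat'
  · exact absurd rfl ends_ne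
  rcases w with _ | ⟨y, v⟩
  · exact absurd (by simp) ends_ne
  refine ⟨y, v, x, ?_, rfl⟩
  rintro rfl
  refine ends_ne ?_
  have length_eq : (x :: v ++ [x]).length = v.length + 2 := by simp
  rw [length_eq, show v.length + 2 - 1 = v.length + 1 from rfl, ones_cons_concat_length,
    ones_cons_concat_of_le x x le_rfl, ← zero_add 1, ones_cons_concat_of_le x x (Nat.zero_le _)]
  simp only [ones_zero]
  omega

section Swap

variable {v : List Bool}

theorem ones_true_false_eq_add_one {i : ℕ} (hi : 0 < i) (hiv : i < v.length + 2) :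
    ones (true :: v ++ [false]) i = ones (false :: v ++ [true]) i + 1 := by
  obtain ⟨i, rfl⟩ := Nat.exists_eq_add_one_of_ne_zero hi.ne'
  rw [ones_cons_concat_of_le _ _ (by omega), ones_cons_concat_of_le _ _ (by omega)]
  simp [add_comm]

theorem ones_true_false_length :
    ones (true :: v ++ [false]) (v.length + 2) = ones (false :: v ++ [true]) (v.length + 2) := by
  rw [ones_cons_concat_length, ones_cons_concat_length]
  simp [add_comm]

theorem ones_false_true_one : ones (false :: v ++ [true]) 1 = 0 := by
  simpa using ones_cons_concat_of_le false true v.length.zero_le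

theorem ones_false_true_length :
    ones (false :: v ++ [true]) (v.length + 2) =
      ones (false :: v ++ [true]) (v.length + 1) + 1 := by
  rw [ones_cons_concat_length, ones_cons_concat_of_le _ _ le_rfl, Bool.toNat_true]

theorem ones_add_le_wrap_of_balancedOn
    (right : BalancedOn (ones (true :: v ++ [false])) 1 (v.length + 2)) {i j k : ℕ} (hk : 0 < k)
    (hi : i < v.length + 2) (hj : j < v.length + 2) (hij : i + j = v.length + 2 + k) :
    ones (false :: v ++ [true]) i + ones (false :: v ++ [true]) j ≤
      ones (false :: v ++ [true]) (v.length + 2) + ones (false :: v ++ [true]) k := by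
  have := right k i j (v.length + 2)
  have := ones_true_false_length (v := v)
  have := ones_true_false_eq_add_one (v := v) hk (by omega)
  have := ones_true_false_eq_add_one (v := v) (i := i) (by omega) hi
  have := ones_true_false_eq_add_one (v := v) (i := j) (by omega) hj
  omega

theorem nearlyAdditive_of_balancedOn
    (left : BalancedOn (ones (true :: v ++ [false])) 0 (v.length + 1))
    (right : BalancedOn (ones (true :: v ++ [false])) 1 (v.length + 2)) :
    NearlyAdditive (ones (false :: v ++ [true])) (v.length + 2) := by
  have wrap {i j k} := ones_add_le_wrap_of_balancedOn right (i := i) (j := j) (k := k)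
  have interior {i} := ones_true_false_eq_add_one (v := v) (i := i)
  have zero := ones_zero (false :: v ++ [true])
  have zero' := ones_zero (true :: v ++ [false])
  have one := ones_false_true_one (v := v)
  have mono := ones_mono (false :: v ++ [true])
  set f := ones (false :: v ++ [true])
  set g := ones (true :: v ++ [false])
  refine ⟨fun i j hij => ?_, fun i j k hi hj hij => ?_, fun i i' j j' hi hii' hi' hj hj' h => ?_⟩
  · rcases i.eq_zero_or_pos with rfl | hi
    · simp [zero]
    rcases j.eq_zero_or_pos with rfl | hj
    · simp [zero]
    have := left 0 i j (i + j)
    have := interior hi (by omega)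
    have := interior hj (by omega)
    have := interior (i := i + j) (by omega) hij
    omega
  · rcases k.eq_zero_or_pos with rfl | hk
    · have := mono hi.le
      have := mono hj.le
      -- As `f 1 = 0`, the case `k = 0` follows from the case `k = 1`.
      rcases eq_or_ne j (v.length + 1) with rfl | hj'
      · obtain rfl : i = 1 := by omega
        omega
      · have := wrap one_pos hi (j := j + 1) (by omega) (by omega)
        have := mono (Nat.le_add_right j 1)
        omega
    · exact wrap hk hi hj hij
  · have := left i i' j j'
    have := interior (i := i) (by omega) (by omega)
    have := interior (i := i') (by omega) (by omega)
    have := interior (i := j) (by omega) (by omega)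
    have := interior (i := j') (by omega) (by omega)
    omega

theorem NearlyAdditive.balancedOn_left
    (hf : NearlyAdditive (ones (false :: v ++ [true])) (v.length + 2)) :
    BalancedOn (ones (true :: v ++ [false])) 0 (v.length + 1) := by
  have interior {i} := ones_true_false_eq_add_one (v := v) (i := i)
  have step := ones_succ_le (false :: v ++ [true])
  have one := ones_false_true_one (v := v)
  have zero := ones_zero (true :: v ++ [false])
  set f := ones (false :: v ++ [true])
  set g := ones (true :: v ++ [false])
  intro i i' j j' _ hii' hi' _ hj' h
  rcases i'.eq_zero_or_pos with rfl | hi'₀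
  · obtain ⟨rfl, rfl⟩ : i = 0 ∧ j = j' := by omega
    omega
  rcases j'.eq_zero_or_pos with rfl | hj'₀
  · obtain ⟨rfl, rfl⟩ : j = 0 ∧ i = i' := by omega
    omega
  have := interior hi'₀ (by omega)
  have := interior hj'₀ (by omega)
  rcases i.eq_zero_or_pos with rfl | hi₀ <;> rcases j.eq_zero_or_pos with rfl | hj₀
  · obtain rfl : i' = j' := by omega
    omega
  · have := interior hj₀ (by omega)
    have := hf.add_le i' j (by omega)
    rw [show i' + j = j' by omega] at this
    omega
  · have := interior hi₀ (by omega)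
    have := hf.balancedOn i i' 1 (j' + 1)
    have := step j'
    omega
  · have := interior hi₀ (by omega)
    have := interior hj₀ (by omega)
    have := hf.balancedOn i i' j j'
    omega

theorem NearlyAdditive.balancedOn_right
    (hf : NearlyAdditive (ones (false :: v ++ [true])) (v.length + 2)) :
    BalancedOn (ones (true :: v ++ [false])) 1 (v.length + 2) := by
  have interior {i} := ones_true_false_eq_add_one (v := v) (i := i)
  have last := ones_true_false_length (v := v)
  have last_step := ones_false_true_length (v := v)
  have mono := ones_mono (false :: v ++ [true])
  set f := ones (false :: v ++ [true])
  set g := ones (true :: v ++ [false])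
  intro i i' j j' hi hii' hi' hj hj' h
  rcases hii'.eq_or_lt with rfl | hii'
  · obtain rfl : j = j' := by omega
    omega
  have := interior (i := i) (by omega) (by omega)
  have := interior (i := j) (by omega) (by omega)
  rcases hi'.eq_or_lt with rfl | hi' <;> rcases hj'.eq_or_lt with rfl | hj'
  · obtain rfl : i = j := by omega
    omega
  · have := interior (i := j') (by omega) hj'
    have := hf.balancedOn i (v.length + 1) j (j' - 1)
    have := mono (Nat.sub_le j' 1)
    omega
  · have := interior (i := i') (by omega) hi'
    have := hf.add_le_wrap i' j i
    omega
  · have := interior (i := i') (by omega) hi'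
    have := interior (i := j') (by omega) hj'
    have := hf.balancedOn i i' j j'
    omega

theorem NearlyAdditive.not_balancedOn_iff
    (hf : NearlyAdditive (ones (false :: v ++ [true])) (v.length + 2)) :
    ¬ BalancedOn (ones (true :: v ++ [false])) 0 (v.length + 2) ↔
      ∃ p q, 0 < p ∧ 0 < q ∧ p + q = v.length + 2 ∧
        ones (false :: v ++ [true]) (v.length + 2) ≤
          ones (false :: v ++ [true]) p + ones (false :: v ++ [true]) q := by
  rw [balancedOn_iff_prefix_suffix hf.balancedOn_left hf.balancedOn_right]
  have interior {i} := ones_true_false_eq_add_one (v := v) (i := i)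
  have last := ones_true_false_length (v := v)
  have last_step := ones_false_true_length (v := v)
  have one := ones_false_true_one (v := v)
  have zero := ones_zero (true :: v ++ [false])
  set f := ones (false :: v ++ [true])
  set g := ones (true :: v ++ [false])
  constructor
  · intro h
    push Not at h
    obtain ⟨p, q, hpq, h⟩ := h
    rcases p.eq_zero_or_pos with rfl | hp
    · obtain rfl : q = v.length + 2 := by omega
      omega
    rcases q.eq_zero_or_pos with rfl | hq
    · obtain rfl : p = v.length + 2 := by omega
      omega
    have := interior hp (by omega)
    have := interior hq (by omega)
    have := hf.balancedOn q (v.length + 1) 1 p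
    exact ⟨p, q, hp, hq, hpq, by omega⟩
  · rintro ⟨p, q, hp, hq, hpq, hsplit⟩ h
    have := interior hp (by omega)
    have := interior hq (by omega)
    have := h p q hpq
    omega

theorem isMinimalForbidden_true_false_iff_ones :
    IsMinimalForbidden (true :: v ++ [false]) ↔
      (∀ i ≤ v.length + 2, ones (false :: v ++ [true]) i =
        i * ones (false :: v ++ [true]) (v.length + 2) / (v.length + 2)) ∧
      1 < (v.length + 2).gcd (ones (false :: v ++ [true]) (v.length + 2)) := by
  have length_eq : (true :: v ++ [false]).length = v.length + 2 := by simp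
  rw [← nearlyAdditive_and_split_iff (Nat.succ_pos _), isMinimalForbidden_iff_balancedOn_ones,
    length_eq]
  constructor
  · rintro ⟨unbalanced, left, right⟩
    have hf := nearlyAdditive_of_balancedOn left right
    exact ⟨hf, hf.not_balancedOn_iff.1 unbalanced⟩
  · rintro ⟨hf, hsplit⟩
    exact ⟨hf.not_balancedOn_iff.2 hsplit, hf.balancedOn_left, hf.balancedOn_right⟩

end Swap

theorem length_lowerChristoffel (a b : ℕ) : (lowerChristoffel a b).length = a + b := by
  simp [lowerChristoffel]

theorem ones_lowerChristoffel {a b i : ℕ} (hi : i ≤ a + b) :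
    ones (lowerChristoffel a b) i = i * b / (a + b) := by
  induction i with
  | zero => simp
  | succ i ih =>
    have step := succ_mul_div_eq_or_eq_add_one (by omega) (Nat.le_add_left b a) i
    rw [ones_succ (hi.trans_eq (length_lowerChristoffel a b).symm), ih (by omega)]
    rcases step with step | step <;> simp [lowerChristoffel, step]

theorem eq_lowerChristoffel_iff {w : List Bool} {a b : ℕ} :
    w = lowerChristoffel a b ↔
      w.length = a + b ∧ ∀ i ≤ a + b, ones w i = i * b / (a + b) := by
  constructor
  · rintro rfl
    exact ⟨length_lowerChristoffel a b, fun i => ones_lowerChristoffel⟩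
  · rintro ⟨hlen, h⟩
    refine eq_of_ones_eq (hlen.trans (length_lowerChristoffel a b).symm) fun i hi => ?_
    rw [hlen] at hi
    rw [h i hi, ones_lowerChristoffel hi]

theorem exists_eq_lowerChristoffel_iff {w : List Bool} :
    (∃ a b, 1 < a.gcd b ∧ w = lowerChristoffel a b) ↔
      (∀ i ≤ w.length, ones w i = i * ones w w.length / w.length) ∧
        1 < w.length.gcd (ones w w.length) := by
  constructor
  · rintro ⟨a, b, hgcd, hw⟩
    obtain ⟨hlen, hones⟩ := eq_lowerChristoffel_iff.1 hw
    have hpos : 0 < a + b := by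
      by_contra! h
      obtain ⟨rfl, rfl⟩ : a = 0 ∧ b = 0 := by omega
      simp at hgcd
    have hb : ones w (a + b) = b := (hones _ le_rfl).trans (Nat.mul_div_cancel_left b hpos)
    rw [hlen, hb, Nat.gcd_add_self_left]
    exact ⟨hones, hgcd⟩
  · rintro ⟨hones, hgcd⟩
    obtain ⟨a, ha⟩ : ∃ a, w.length = a + ones w w.length :=
      Nat.exists_eq_add_of_le' (List.count_le_length.trans (List.length_take_le _ _))
    generalize ones w w.length = N at ha hones hgcd
    rw [ha] at hones hgcd
    rw [Nat.gcd_add_self_left] at hgcd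
    exact ⟨a, N, hgcd, eq_lowerChristoffel_iff.2 ⟨ha, hones⟩⟩

theorem flatten_replicate_map_range {α : Type*} {g : ℕ → α} {p : ℕ} (hg : Function.Periodic g p)
    (m : ℕ) :
    (List.replicate m ((List.range p).map g)).flatten = (List.range (m * p)).map g := by
  induction m with
  | zero => simp
  | succ m ih =>
    rw [List.replicate_succ, List.flatten_cons, ih, add_one_mul, add_comm, List.range_add,
      List.map_append, List.map_map]
    congr 1
    refine List.map_congr_left fun i _ => ?_
    rw [Function.comp_apply, add_comm, hg]

theorem wpow_lowerChristoffel (a b m : ℕ) :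
    wpow (lowerChristoffel a b) m = lowerChristoffel (m * a) (m * b) := by
  rcases m.eq_zero_or_pos with rfl | hm
  · simp [wpow, lowerChristoffel]
  rcases (a + b).eq_zero_or_pos with hab | hab
  · obtain ⟨rfl, rfl⟩ : a = 0 ∧ b = 0 := by omega
    simp [wpow, lowerChristoffel]
  have floor_add (i : ℕ) : (i + (a + b)) * b / (a + b) = i * b / (a + b) + b := by
    rw [add_mul, Nat.add_mul_div_left _ _ hab]
  have floor_mul (i : ℕ) : i * (m * b) / (m * (a + b)) = i * b / (a + b) := by
    rw [mul_left_comm, Nat.mul_div_mul_left _ _ hm]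
  rw [wpow, lowerChristoffel, flatten_replicate_map_range, lowerChristoffel, ← mul_add]
  · simp only [floor_mul]
  · intro i
    simp only [add_right_comm i (a + b) 1, floor_add, ne_eq, Nat.add_right_cancel_iff]

theorem ceil_add_floor {a b : ℕ} (hab : 0 < a + b) (i : ℕ) :
    (i * a + (a + b) - 1) / (a + b) + i * b / (a + b) = i := by
  have hle : i * b / (a + b) ≤ i :=
    Nat.div_le_of_le_mul (by rw [mul_comm]; exact Nat.mul_le_mul_right i (Nat.le_add_left b a))
  have hlt : i * b < (a + b) * (i + 1) := by
    nlinarith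
  have hsub : i * a + (a + b) - 1 = (a + b) * (i + 1) - (i * b + 1) := by
    rw [mul_add_one, add_mul, mul_comm a, mul_comm b]
    omega
  rw [hsub, Nat.mul_sub_div _ _ _ hlt]
  omega

theorem map_not_lowerChristoffel (a b : ℕ) :
    (lowerChristoffel a b).map not = upperChristoffel b a := by
  rw [lowerChristoffel, upperChristoffel, List.map_map, add_comm b a]
  refine List.map_congr_left fun i hi => ?_
  have hab : 0 < a + b := (Nat.zero_le i).trans_lt (List.mem_range.1 hi)
  have complement := ceil_add_floor hab i
  have complement_succ := ceil_add_floor hab (i + 1)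
  have step := succ_mul_div_eq_or_eq_add_one hab (Nat.le_add_left b a) i
  rw [Function.comp_apply, ← decide_not, decide_eq_decide]
  omega

theorem map_not_map_not (w : List Bool) : (w.map not).map not = w :=
  Bool.involutive_not.list_map w

theorem count_true_map_not (w : List Bool) : (w.map not).count true + w.count true = w.length := by
  rw [← List.count_not_add_count w true]
  congr 1
  exact List.count_map_of_injective w not Bool.involutive_not.injective false

theorem BalancedWord.map_not {w : List Bool} (h : BalancedWord w) : BalancedWord (w.map not) := by
  intro u v hu hv huv
  obtain ⟨u, hu', rfl⟩ := List.infix_map_iff.1 hu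
  obtain ⟨v, hv', rfl⟩ := List.infix_map_iff.1 hv
  rw [List.length_map, List.length_map] at huv
  have balance := h u v hu' hv' huv
  have := count_true_map_not u
  have := count_true_map_not v
  rw [abs_le] at balance ⊢
  omega

theorem IsMinimalForbidden.map_not {z : List Bool} (h : IsMinimalForbidden z) :
    IsMinimalForbidden (z.map not) := by
  refine ⟨fun hz => h.1 ?_, fun u hu hne => ?_⟩
  · rw [← map_not_map_not z]
    exact hz.map_not
  · obtain ⟨u, hu', rfl⟩ := List.infix_map_iff.1 hu
    exact (h.2 u hu' fun heq => hne (congrArg _ heq)).map_not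

theorem IsPrimitiveChristoffel.map_not {c : List Bool} (h : IsPrimitiveChristoffel c) :
    IsPrimitiveChristoffel (c.map not) := by
  obtain ⟨a, b, hab, rfl | rfl⟩ := h
  · exact ⟨b, a, hab.symm, .inr (map_not_lowerChristoffel a b)⟩
  · rw [← map_not_lowerChristoffel, map_not_map_not]
    exact ⟨b, a, hab.symm, .inl rfl⟩

theorem wpow_map_not (c : List Bool) (m : ℕ) : wpow (c.map not) m = (wpow c m).map not := by
  rw [wpow, wpow, List.map_flatten, List.map_replicate]

/-- The powers of exponent at least two of primitive Christoffel words. -/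
def IsChristoffelPower (w : List Bool) : Prop :=
  ∃ c m, 2 ≤ m ∧ IsPrimitiveChristoffel c ∧ w = wpow c m

theorem IsChristoffelPower.map_not {w : List Bool} (h : IsChristoffelPower w) :
    IsChristoffelPower (w.map not) := by
  obtain ⟨c, m, hm, hc, rfl⟩ := h
  exact ⟨c.map not, m, hm, hc.map_not, (wpow_map_not c m).symm⟩

theorem isChristoffelPower_lowerChristoffel {a b : ℕ} (hab : 1 < a.gcd b) :
    IsChristoffelPower (lowerChristoffel a b) := by
  obtain ⟨a', b', coprime, ha, hb⟩ := Nat.exists_coprime a b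
  refine ⟨lowerChristoffel a' b', a.gcd b, hab, ⟨a', b', coprime, .inl rfl⟩, ?_⟩
  rw [wpow_lowerChristoffel, mul_comm, ← ha, mul_comm, ← hb]

theorem IsChristoffelPower.exists_lowerChristoffel {w : List Bool} (h : IsChristoffelPower w) :
    ∃ a b, 1 < a.gcd b ∧ (w = lowerChristoffel a b ∨ w.map not = lowerChristoffel a b) := by
  obtain ⟨c, m, hm, ⟨a, b, coprime, rfl | rfl⟩, rfl⟩ := h
  · refine ⟨m * a, m * b, ?_, .inl (wpow_lowerChristoffel a b m)⟩
    rwa [Nat.gcd_mul_left, coprime, mul_one]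
  · refine ⟨m * b, m * a, ?_, .inr ?_⟩
    · rwa [Nat.gcd_mul_left, coprime.symm, mul_one]
    · rw [← wpow_map_not, ← map_not_lowerChristoffel, map_not_map_not, wpow_lowerChristoffel]

theorem true_false_ne_lowerChristoffel (v : List Bool) (a b : ℕ) :
    true :: v ++ [false] ≠ lowerChristoffel a b := by
  intro h
  obtain ⟨hlen, hones⟩ := eq_lowerChristoffel_iff.1 h
  have length_eq : a + b = v.length + 2 := by simp [← hlen]
  have first : ones (true :: v ++ [false]) 1 = 1 := by
    simpa using ones_cons_concat_of_le true false v.length.zero_le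
  have last := ones_cons_concat_length true false v
  have pred := ones_cons_concat_of_le true false (le_refl v.length)
  have super := mul_div_add_mul_div_le (n := v.length + 2) (N := b) 1 (v.length + 1)
  rw [length_eq] at hones
  rw [← hones _ (by omega), ← hones _ (by omega), show 1 + (v.length + 1) = v.length + 2 by omega,
    ← hones _ le_rfl, first, last, pred, Bool.toNat_false] at super
  omega

theorem isMinimalForbidden_true_false_iff {v : List Bool} :
    IsMinimalForbidden (true :: v ++ [false]) ↔ IsChristoffelPower (false :: v ++ [true]) := by
  have length_eq : (false :: v ++ [true]).length = v.length + 2 := by simp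
  rw [isMinimalForbidden_true_false_iff_ones, ← length_eq, ← exists_eq_lowerChristoffel_iff]
  constructor
  · rintro ⟨a, b, hab, hw⟩
    rw [hw]
    exact isChristoffelPower_lowerChristoffel hab
  · intro h
    obtain ⟨a, b, hab, hw | hw⟩ := h.exists_lowerChristoffel
    · exact ⟨a, b, hab, hw⟩
    · refine absurd ?_ (true_false_ne_lowerChristoffel (v.map not) a b)
      simpa using hw

theorem isMinimalForbidden_map_not_iff {z : List Bool} :
    IsMinimalForbidden (z.map not) ↔ IsMinimalForbidden z :=
  ⟨fun h => map_not_map_not z ▸ h.map_not, IsMinimalForbidden.map_not⟩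

theorem isChristoffelPower_map_not_iff {w : List Bool} :
    IsChristoffelPower (w.map not) ↔ IsChristoffelPower w :=
  ⟨fun h => map_not_map_not w ▸ h.map_not, IsChristoffelPower.map_not⟩

theorem isMinimalForbidden_iff_isChristoffelPower {x y : Bool} (hxy : x ≠ y) (v : List Bool) :
    IsMinimalForbidden (y :: v ++ [x]) ↔ IsChristoffelPower (x :: v ++ [y]) := by
  obtain rfl := Bool.eq_not_of_ne hxy
  cases y
  · rw [← isMinimalForbidden_map_not_iff, ← isChristoffelPower_map_not_iff]
    simpa using isMinimalForbidden_true_false_iff (v := v.map not)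
  · exact isMinimalForbidden_true_false_iff

/-- The minimal forbidden words for the language of balanced words are
exactly the words `y·v·x` with `{x,y} = {0,1}` and `x·v·y` a non-primitive power of a
primitive Christoffel word. -/
theorem stmt14 (z : List Bool) :
    (¬ BalancedWord z ∧ ∀ u : List Bool, u <:+: z → u ≠ z → BalancedWord u) ↔
    ∃ (x y : Bool) (v c : List Bool) (m : ℕ), x ≠ y ∧ 2 ≤ m ∧
      IsPrimitiveChristoffel c ∧ z = y :: v ++ [x] ∧ x :: v ++ [y] = wpow c m := by
  constructor
  · intro hz
    obtain ⟨y, v, x, hxy, rfl⟩ := IsMinimalForbidden.exists_eq_cons_concat hz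
    obtain ⟨c, m, hm, hc, hpow⟩ := (isMinimalForbidden_iff_isChristoffelPower hxy v).1 hz
    exact ⟨x, y, v, c, m, hxy, hm, hc, rfl, hpow⟩
  · rintro ⟨x, y, v, c, m, hxy, hm, hc, rfl, hpow⟩
    exact (isMinimalForbidden_iff_isChristoffelPower hxy v).2 ⟨c, m, hm, hc, hpow⟩
end
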